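/- arXiv:2402.00846 — 5 statements merged into one kernel-verified Lean document; each statement's English description precedes it below -/
import Mathlib

section
/- Let H be a complex Hilbert space and let W and W_n (n ∈ ℕ) be closed subspaces of H. Suppose that: (i) there exists a subspace W̃ ⊆ W that is dense in W such that for every u ∈ W̃ there exists a sequence u_n ∈ W_n with ‖u_n − u‖_H → 0; and (ii) there exists a sequence of closed subspaces W_n⁺ of H with W_n ⊆ W_n⁺ for all n such that W_n⁺ converges to W in the Mosco sense. Then W_n converges to W in the Mosco sense as n → ∞. -/
open Filter Topology
open scoped InnerProductSpace

/-- Mosco convergence of a sequence of closed subspaces `Wₙ` of a Hilbert space `H` to a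
closed subspace `W`: (i) every `u ∈ W` is the strong limit of a sequence `uₙ ∈ Wₙ`;
(ii) every weak limit of a sequence `u_{n_j} ∈ W_{n_j}` along a subsequence lies in `W`. -/
def MoscoConverges {H : Type*} [NormedAddCommGroup H] [InnerProductSpace ℂ H]
    (Wn : ℕ → Submodule ℂ H) (W : Submodule ℂ H) : Prop :=
  (∀ u ∈ W, ∃ v : ℕ → H, (∀ n, v n ∈ Wn n) ∧
      Tendsto (fun n => ‖v n - u‖) atTop (𝓝 0)) ∧
  (∀ (φ : ℕ → ℕ), StrictMono φ → ∀ (v : ℕ → H) (u : H),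
      (∀ j, v j ∈ Wn (φ j)) →
      (∀ w : H, Tendsto (fun j => ⟪v j, w⟫_ℂ) atTop (𝓝 ⟪u, w⟫_ℂ)) → u ∈ W)

/-!
The set of strong limits of selections from `Wₙ` consists of the points whose distance to `Wₙ`
tends to `0`. It is closed because the distance functions are 1-Lipschitz, so approximability
passes from a dense subset of `W` to all of `W`. The set of weak subsequential limits is monotone
in the sequence, so the bound by `W` passes from `Wₙ⁺` to `Wₙ`.
-/

section StrongLowerLimit

variable {X : Type*} [PseudoMetricSpace X] {s : ℕ → Set X} {x : X}

/-- The (Kuratowski) lower limit of a sequence of sets: the limits of the sequences selecting a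
point from every `s n`. It is the largest set satisfying the first condition of Mosco
convergence. -/
def strongLowerLimit (s : ℕ → Set X) : Set X :=
  {x | ∃ v : ℕ → X, (∀ n, v n ∈ s n) ∧ Tendsto v atTop (𝓝 x)}

theorem mem_strongLowerLimit_iff_tendsto_infDist (hs : ∀ n, (s n).Nonempty) :
    x ∈ strongLowerLimit s ↔ Tendsto (fun n => Metric.infDist x (s n)) atTop (𝓝 0) := by
  constructor
  · rintro ⟨v, hv, hvx⟩
    refine squeeze_zero (fun n => Metric.infDist_nonneg)
      (fun n => Metric.infDist_le_dist_of_mem (hv n)) ?_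
    simpa only [dist_comm] using tendsto_iff_dist_tendsto_zero.1 hvx
  · intro hx
    have exists_near_infDist (n : ℕ) :
        ∃ y ∈ s n, dist x y < Metric.infDist x (s n) + 1 / ((n : ℝ) + 1) :=
      (Metric.infDist_lt_iff (hs n)).1 (lt_add_of_pos_right _ Nat.one_div_pos_of_nat)
    choose v hv hxv using exists_near_infDist
    have tendsto_bound :
        Tendsto (fun n : ℕ => Metric.infDist x (s n) + 1 / ((n : ℝ) + 1)) atTop (𝓝 0) := by
      simpa only [add_zero] using hx.add tendsto_one_div_add_atTop_nhds_zero_nat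
    refine ⟨v, hv, tendsto_iff_dist_tendsto_zero.2 ?_⟩
    exact squeeze_zero (fun n => dist_nonneg) (fun n => dist_comm x (v n) ▸ (hxv n).le)
      tendsto_bound

theorem isClosed_setOf_tendsto_infDist {ι : Type*} (l : Filter ι) (t : ι → Set X) :
    IsClosed {x | Tendsto (fun i => Metric.infDist x (t i)) l (𝓝 0)} :=
  (LipschitzWith.uniformEquicontinuous (fun i x => Metric.infDist x (t i)) 1
    fun i => Metric.lipschitz_infDist_pt (t i)).equicontinuous.isClosed_setOfPred_tendsto
      continuous_const

theorem isClosed_strongLowerLimit (s : ℕ → Set X) : IsClosed (strongLowerLimit s) := by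
  by_cases hs : ∀ n, (s n).Nonempty
  · simpa only [← mem_strongLowerLimit_iff_tendsto_infDist hs, Set.ofPred_mem_eq] using
      isClosed_setOf_tendsto_infDist atTop s
  · have strongLowerLimit_eq_empty : strongLowerLimit s = ∅ :=
      Set.eq_empty_of_forall_notMem fun _ ⟨v, hv, _⟩ => hs fun n => ⟨v n, hv n⟩
    exact strongLowerLimit_eq_empty ▸ isClosed_empty

theorem mem_strongLowerLimit_iff_norm {E : Type*} [SeminormedAddCommGroup E] {s : ℕ → Set E}
    {u : E} :
    u ∈ strongLowerLimit s ↔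
      ∃ v : ℕ → E, (∀ n, v n ∈ s n) ∧ Tendsto (fun n => ‖v n - u‖) atTop (𝓝 0) := by
  simp only [← tendsto_iff_norm_sub_tendsto_zero]
  rfl

end StrongLowerLimit

section WeakUpperLimit

variable (𝕜 : Type*) {E : Type*} [RCLike 𝕜] [NormedAddCommGroup E] [InnerProductSpace 𝕜 E]

/-- The sequential weak upper limit of a sequence of sets: the weak limits of the sequences
selecting points from a subsequence of `s`. It is the smallest set satisfying the second condition
of Mosco convergence. Weak convergence is tested against the inner product, which represents every
continuous functional when `E` is complete. -/
def weakUpperLimit (s : ℕ → Set E) : Set E :=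
  {u | ∃ φ : ℕ → ℕ, StrictMono φ ∧ ∃ v : ℕ → E, (∀ j, v j ∈ s (φ j)) ∧
    ∀ w : E, Tendsto (fun j => ⟪v j, w⟫_𝕜) atTop (𝓝 ⟪u, w⟫_𝕜)}

theorem weakUpperLimit_mono {s t : ℕ → Set E} (hst : ∀ n, s n ⊆ t n) :
    weakUpperLimit 𝕜 s ⊆ weakUpperLimit 𝕜 t :=
  fun _ ⟨φ, hφ, v, hv, hvu⟩ => ⟨φ, hφ, v, fun j => hst (φ j) (hv j), hvu⟩

end WeakUpperLimit

section Mosco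

variable {H : Type*} [NormedAddCommGroup H] [InnerProductSpace ℂ H]

theorem moscoConverges_iff {Wn : ℕ → Submodule ℂ H} {W : Submodule ℂ H} :
    MoscoConverges Wn W ↔
      (W : Set H) ⊆ strongLowerLimit (fun n => (Wn n : Set H)) ∧
        weakUpperLimit ℂ (fun n => (Wn n : Set H)) ⊆ W := by
  refine and_congr ?_ ?_
  · exact forall₂_congr fun _ _ => mem_strongLowerLimit_iff_norm.symm
  · exact ⟨fun h u ⟨φ, hφ, v, hv, hvu⟩ => h φ hφ v u hv hvu,
      fun h φ hφ v u hv hvu => h ⟨φ, hφ, v, hv, hvu⟩⟩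

theorem moscoConverges_of_dense_approx_of_le_general
    {W : Submodule ℂ H} {Wn : ℕ → Submodule ℂ H} {D : Set H} {t : ℕ → Set H}
    (hWD : (W : Set H) ⊆ closure D)
    (hD : D ⊆ strongLowerLimit (fun n => (Wn n : Set H)))
    (hWnt : ∀ n, (Wn n : Set H) ⊆ t n)
    (htW : weakUpperLimit ℂ t ⊆ W) :
    MoscoConverges Wn W :=
  moscoConverges_iff.2
    ⟨hWD.trans (closure_minimal hD (isClosed_strongLowerLimit _)),
      (weakUpperLimit_mono ℂ hWnt).trans htW⟩

end Mosco

/-- Chandler-Wilde–Hewett style criterion for Mosco convergence. If a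
dense subspace `W̃` of `W` is approximable by elements of `Wₙ`, and `Wₙ ⊆ Wₙ⁺` for a
sequence of closed subspaces `Wₙ⁺` Mosco-converging to `W`, then `Wₙ` Mosco-converges
to `W`. -/
theorem moscoConverges_of_dense_approx_of_le
    {H : Type*} [NormedAddCommGroup H] [InnerProductSpace ℂ H] [CompleteSpace H]
    (W : Submodule ℂ H) (Wn : ℕ → Submodule ℂ H)
    (hW : IsClosed (W : Set H)) (hWn : ∀ n, IsClosed (Wn n : Set H))
    (Wt : Submodule ℂ H) (hWtle : Wt ≤ W)
    (hWtdense : closure (Wt : Set H) = (W : Set H))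
    (happrox : ∀ u ∈ Wt, ∃ v : ℕ → H, (∀ n, v n ∈ Wn n) ∧
      Tendsto (fun n => ‖v n - u‖) atTop (𝓝 0))
    (Wnp : ℕ → Submodule ℂ H) (hWnp : ∀ n, IsClosed ((Wnp n : Set H)))
    (hle : ∀ n, Wn n ≤ Wnp n)
    (hMosco : MoscoConverges Wnp W) :
    MoscoConverges Wn W :=
  moscoConverges_of_dense_approx_of_le_general hWtdense.ge
    (fun u hu => mem_strongLowerLimit_iff_norm.2 (happrox u hu)) hle (moscoConverges_iff.1 hMosco).2
end

section
/- Let H be a complex Hilbert space, let Σ ⊂ ℂ be open, and let K : Σ → B(H) be an analytic operator-valued function such that K(z) is a compact operator for every z ∈ Σ and sup_{z ∈ Σ} ‖K(z)‖ < +∞. Let (P_n)_{n ∈ ℕ} be a sequence of orthogonal projections on H converging strongly to the identity. Then for every compact set Q ⊆ Σ, sup_{z ∈ Q} ‖K(z) − P_n K(z) P_n‖ → 0 as n → ∞. -/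
open Filter Topology

/-!
The maps `T ↦ Pₙ T Pₙ` on bounded operators are uniformly Lipschitz, so on the compact set `K(Q)`
it suffices to show pointwise convergence, that is `Pₙ T Pₙ → T` in norm for each compact `T`.
The same principle, applied to the maps `Pₙ` on a compact set containing the image under `T` of a
bounded set, gives `Pₙ T → T` in norm. Finally `T Pₙ → T` follows from the convergence of
`Pₙ (T† T)`, since `‖T D‖² = ‖D† T† T D‖ ≤ ‖D† T† T‖ ‖D‖` for `D = Pₙ - 1`.
-/

open ContinuousLinearMap
open scoped InnerProduct

section UniformConvergence

variable {ι X α : Type*} [TopologicalSpace X] [UniformSpace α]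

theorem tendstoUniformlyOn_of_equicontinuousOn {F : ι → X → α} {f : X → α} {l : Filter ι}
    {s : Set X} (hs : IsCompact s) (hF : EquicontinuousOn F s)
    (hlim : ∀ x ∈ s, Tendsto (F · x) l (𝓝 (f x))) : TendstoUniformlyOn F f l s := by
  have hunif := (EquicontinuousOn.tendsto_uniformOnFun_iff_pi' (𝔖 := {s}) (by simpa using hs)
    (by simpa using hF) l f).mpr (tendsto_pi_nhds.mpr fun x => hlim x (by simpa using x.2))
  exact UniformOnFun.tendsto_iff_tendstoUniformlyOn.mp hunif s rfl

end UniformConvergence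

section StrongConvergence

variable {ι 𝕜 E F G : Type*} [NontriviallyNormedField 𝕜] {l : Filter ι}
  [AddCommGroup E] [Module 𝕜 E] [TopologicalSpace E]
  [AddCommGroup F] [Module 𝕜 F] [TopologicalSpace F] [ContinuousConstSMul 𝕜 F]
  [AddCommGroup G] [Module 𝕜 G] [UniformSpace G] [IsUniformAddGroup G]

theorem tendsto_comp_isCompactOperator {A : ι → F →L[𝕜] G} {A₀ : F →L[𝕜] G}
    (hequi : Equicontinuous fun i => ⇑(A i)) (hA : ∀ x, Tendsto (A · x) l (𝓝 (A₀ x)))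
    {T : E →L[𝕜] F} (hT : IsCompactOperator T) :
    Tendsto (A · ∘L T) l (𝓝 (A₀ ∘L T)) := by
  refine (UniformConvergenceCLM.tendsto_iff_tendstoUniformlyOn _ _ _).mpr fun s hs => ?_
  obtain ⟨M, hM, hTM⟩ := hT.image_subset_compact_of_isVonNBounded (f := (T : E →ₗ[𝕜] F)) hs
  have hunif : TendstoUniformlyOn (fun i => ⇑(A i)) A₀ l M :=
    tendstoUniformlyOn_of_equicontinuousOn hM (hequi.equicontinuousOn M) fun x _ => hA x
  exact (hunif.comp T).mono (Set.image_subset_iff.mp hTM)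

end StrongConvergence

section OperatorNorm

variable {ι 𝕜 D E F G : Type*} [NontriviallyNormedField 𝕜]
  [SeminormedAddCommGroup D] [NormedSpace 𝕜 D] [SeminormedAddCommGroup E] [NormedSpace 𝕜 E]
  [SeminormedAddCommGroup F] [NormedSpace 𝕜 F] [SeminormedAddCommGroup G] [NormedSpace 𝕜 G]

theorem equicontinuous_of_opNorm_le {A : ι → E →L[𝕜] F} {C : ℝ} (hA : ∀ i, ‖A i‖ ≤ C) :
    Equicontinuous fun i => ⇑(A i) :=
  ((NormedSpace.equicontinuous_TFAE A).out 5 1 :).mp ⟨C, hA⟩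

theorem equicontinuous_comp_comp_of_opNorm_le {A : ι → F →L[𝕜] G} {B : ι → D →L[𝕜] E} {a b : ℝ}
    (hA : ∀ i, ‖A i‖ ≤ a) (hB : ∀ i, ‖B i‖ ≤ b) :
    Equicontinuous fun i (T : E →L[𝕜] F) => A i ∘L T ∘L B i := by
  let Φ (i : ι) : (E →L[𝕜] F) →L[𝕜] D →L[𝕜] G := (A i).postcomp D ∘L (B i).precomp F
  refine equicontinuous_of_opNorm_le (A := Φ) (C := a * b) fun i => ?_
  have ha : 0 ≤ a := (norm_nonneg _).trans (hA i)
  have hb : 0 ≤ b := (norm_nonneg _).trans (hB i)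
  refine opNorm_le_bound _ (by positivity) fun T => ?_
  calc ‖A i ∘L T ∘L B i‖ ≤ ‖A i‖ * (‖T‖ * ‖B i‖) :=
        (opNorm_comp_le _ _).trans (by gcongr; exact opNorm_comp_le _ _)
    _ ≤ a * (‖T‖ * b) := by gcongr <;> simp only [hA, hB]
    _ = a * b * ‖T‖ := by ring

end OperatorNorm

section Hilbert

variable {ι 𝕜 D E F G : Type*} [RCLike 𝕜] {l : Filter ι}
  [NormedAddCommGroup D] [InnerProductSpace 𝕜 D] [CompleteSpace D]
  [NormedAddCommGroup E] [InnerProductSpace 𝕜 E] [CompleteSpace E]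
  [NormedAddCommGroup F] [InnerProductSpace 𝕜 F] [CompleteSpace F]
  [SeminormedAddCommGroup G] [NormedSpace 𝕜 G]

theorem sq_norm_comp_le_norm_adjoint_comp (T : E →L[𝕜] F) (B : D →L[𝕜] E) :
    ‖T ∘L B‖ ^ 2 ≤ ‖B† ∘L T† ∘L T‖ * ‖B‖ :=
  calc ‖T ∘L B‖ ^ 2 = ‖(B† ∘L T† ∘L T) ∘L B‖ := by
        rw [sq, ← norm_adjoint_comp_self, adjoint_comp, comp_assoc, comp_assoc, comp_assoc]
    _ ≤ ‖B† ∘L T† ∘L T‖ * ‖B‖ := opNorm_comp_le _ _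

theorem tendsto_isCompactOperator_comp {B : ι → D →L[𝕜] E} {B₀ : D →L[𝕜] E} {b : ℝ}
    (hBnorm : ∀ i, ‖B i‖ ≤ b) (hB : ∀ x, Tendsto (fun i => ((B i)†) x) l (𝓝 ((B₀†) x)))
    {T : E →L[𝕜] F} (hT : IsCompactOperator T) :
    Tendsto (T ∘L B ·) l (𝓝 (T ∘L B₀)) := by
  have hadj : Tendsto (fun i => (B i)† ∘L T† ∘L T) l (𝓝 (B₀† ∘L T† ∘L T)) :=
    tendsto_comp_isCompactOperator
      (equicontinuous_of_opNorm_le fun i => (adjoint.norm_map (B i)).trans_le (hBnorm i)) hB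
      (hT.clm_comp (T†))
  have hsqrt : Tendsto (fun i =>
      √(‖(B i)† ∘L T† ∘L T - B₀† ∘L T† ∘L T‖ * (b + ‖B₀‖))) l (𝓝 0) := by
    simpa using ((tendsto_iff_norm_sub_tendsto_zero.mp hadj).mul_const (b + ‖B₀‖)).sqrt
  refine tendsto_iff_norm_sub_tendsto_zero.mpr
    (squeeze_zero (fun _ => norm_nonneg _) (fun i => Real.le_sqrt_of_sq_le ?_) hsqrt)
  calc ‖T ∘L B i - T ∘L B₀‖ ^ 2 = ‖T ∘L (B i - B₀)‖ ^ 2 := by rw [comp_sub]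
    _ ≤ ‖(B i - B₀)† ∘L T† ∘L T‖ * ‖B i - B₀‖ :=
        sq_norm_comp_le_norm_adjoint_comp T (B i - B₀)
    _ ≤ ‖(B i)† ∘L T† ∘L T - B₀† ∘L T† ∘L T‖ * (b + ‖B₀‖) := by
        rw [map_sub, sub_comp]
        gcongr
        exact (norm_sub_le _ _).trans (by gcongr; exact hBnorm i)

variable {A : ι → F →L[𝕜] G} {A₀ : F →L[𝕜] G} {B : ι → D →L[𝕜] E} {B₀ : D →L[𝕜] E} {a b : ℝ}

theorem tendsto_comp_isCompactOperator_comp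
    (hAnorm : ∀ i, ‖A i‖ ≤ a) (hA : ∀ x, Tendsto (A · x) l (𝓝 (A₀ x)))
    (hBnorm : ∀ i, ‖B i‖ ≤ b) (hB : ∀ x, Tendsto (fun i => ((B i)†) x) l (𝓝 ((B₀†) x)))
    {T : E →L[𝕜] F} (hT : IsCompactOperator T) :
    Tendsto (fun i => A i ∘L T ∘L B i) l (𝓝 (A₀ ∘L T ∘L B₀)) := by
  have hleft : Tendsto (fun i => A i ∘L T ∘L B₀) l (𝓝 (A₀ ∘L T ∘L B₀)) :=
    tendsto_comp_isCompactOperator (equicontinuous_of_opNorm_le hAnorm) hA (hT.comp_clm B₀)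
  have hright : Tendsto (fun i => a * ‖T ∘L B i - T ∘L B₀‖) l (𝓝 0) := by
    simpa using (tendsto_iff_norm_sub_tendsto_zero.mp
      (tendsto_isCompactOperator_comp hBnorm hB hT)).const_mul a
  have hdiff : Tendsto (fun i => A i ∘L (T ∘L B i - T ∘L B₀)) l (𝓝 0) :=
    squeeze_zero_norm (fun i => (opNorm_comp_le _ _).trans (by gcongr; exact hAnorm i)) hright
  simpa [comp_sub] using hdiff.add hleft

theorem truncation_tendstoUniformlyOn_compacts_general {X : Type*} [TopologicalSpace X]
    {Q : Set X} (hQ : IsCompact Q) {K : X → E →L[𝕜] F} (hKcont : ContinuousOn K Q)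
    (hKcpt : ∀ z ∈ Q, IsCompactOperator (K z))
    (hAnorm : ∀ i, ‖A i‖ ≤ a) (hA : ∀ x, Tendsto (A · x) l (𝓝 (A₀ x)))
    (hBnorm : ∀ i, ‖B i‖ ≤ b) (hB : ∀ x, Tendsto (fun i => ((B i)†) x) l (𝓝 ((B₀†) x))) :
    TendstoUniformlyOn (fun i z => A i ∘L K z ∘L B i) (fun z => A₀ ∘L K z ∘L B₀) l Q := by
  have hunif : TendstoUniformlyOn (fun i T => A i ∘L T ∘L B i) (fun T => A₀ ∘L T ∘L B₀) l
      (K '' Q) := by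
    refine tendstoUniformlyOn_of_equicontinuousOn (hQ.image_of_continuousOn hKcont)
      ((equicontinuous_comp_comp_of_opNorm_le hAnorm hBnorm).equicontinuousOn _) ?_
    rintro _ ⟨z, hz, rfl⟩
    exact tendsto_comp_isCompactOperator_comp hAnorm hA hBnorm hB (hKcpt z hz)
  exact (hunif.comp K).mono (Set.subset_preimage_image K Q)

end Hilbert

/-- Let `K : Σ → B(H)` be an analytic family of compact operators on an
open set `Σ ⊆ ℂ`, uniformly bounded on `Σ`, and let `(Pₙ)` be orthogonal projections on
the complex Hilbert space `H` converging strongly to the identity. Then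
`sup_{z ∈ Q} ‖K(z) − Pₙ K(z) Pₙ‖ → 0` for every compact `Q ⊆ Σ`. -/
theorem truncation_tendstoUniformlyOn_compacts
    {H : Type*} [NormedAddCommGroup H] [InnerProductSpace ℂ H] [CompleteSpace H]
    (S : Set ℂ) (hS : IsOpen S)
    (K : ℂ → (H →L[ℂ] H)) (hKanal : DifferentiableOn ℂ K S)
    (hKcpt : ∀ z ∈ S, IsCompactOperator (K z))
    (hKbdd : ∃ C : ℝ, ∀ z ∈ S, ‖K z‖ ≤ C)
    (P : ℕ → (H →L[ℂ] H))
    (hPproj : ∀ n, IsIdempotentElem (P n))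
    (hPsa : ∀ n, IsSelfAdjoint (P n))
    (hPstrong : ∀ x : H, Tendsto (fun n => ‖P n x - x‖) atTop (𝓝 0)) :
    ∀ Q : Set ℂ, IsCompact Q → Q ⊆ S →
      TendstoUniformlyOn (fun n z => (P n) ∘L (K z) ∘L (P n)) K atTop Q := by
  intro Q hQ hQS
  have hPnorm (n) : ‖P n‖ ≤ 1 := IsStarProjection.norm_le (P n) ⟨hPproj n, hPsa n⟩
  have hPlim (x) : Tendsto (P · x) atTop (𝓝 (ContinuousLinearMap.id ℂ H x)) :=
    tendsto_iff_norm_sub_tendsto_zero.mpr (hPstrong x)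
  exact truncation_tendstoUniformlyOn_compacts_general (B₀ := .id ℂ H) hQ
    (hKanal.continuousOn.mono hQS) (fun z hz => hKcpt z (hQS hz)) hPnorm hPlim hPnorm
    fun x => by simpa only [(hPsa _).adjoint_eq, adjoint_id] using hPlim x
end

section
/- Let X > 1 be a real number. For a nonzero integer α define m_α := sign(α)·X·(X^α + (X−1)^α)/(X^α − (X−1)^α). Then: (1) for every integer α > 0, m_α = X + 2X·((X/(X−1))^α − 1)^{−1}; (2) for every integer α < 0, m_α = X − 2X·(1 − ((X−1)/X)^α)^{−1}; and (3) m_α → X as |α| → ∞, i.e. for every ε > 0 there is N such that |m_α − X| < ε whenever |α| ≥ N. -/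
/-!
Write `m_α = sign(α) · c · (Rᵅ + rᵅ) / (Rᵅ - rᵅ)`. It is even in `α`: replacing `α` by `-α` turns
each power into its inverse, which changes the sign of the quotient, and `sign(α)` restores it.
Dividing numerator and denominator by `rᵅ` gives the formula for `α > 0`, and evenness carries it
to `α < 0`. Since `‖R / r‖ > 1`, the correction `2c ((R / r)ᵅ - 1)⁻¹` vanishes as `α → ∞`, and by
evenness also as `|α| → ∞`.
-/

open Filter Topology
open Bornology (cobounded)

theorem add_div_sub_eq_one_add_two_mul_inv {K : Type*} [DivisionRing K] {a b : K}
    (hb : b ≠ 0) (hab : a ≠ b) : (a + b) / (a - b) = 1 + 2 * (a / b - 1)⁻¹ := by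
  have hsub : a - b ≠ 0 := sub_ne_zero.2 hab
  calc (a + b) / (a - b) = ((a - b) + 2 * b) / (a - b) := by
        rw [two_mul, ← add_assoc, sub_add_cancel]
    _ = 1 + 2 * (b / (a - b)) := by rw [add_div, div_self hsub, mul_div_assoc]
    _ = 1 + 2 * (a / b - 1)⁻¹ := by rw [div_sub_one hb, inv_div]

theorem inv_add_inv_div_inv_sub_inv {K : Type*} [Field K] {a b : K} (ha : a ≠ 0) (hb : b ≠ 0) :
    (a⁻¹ + b⁻¹) / (a⁻¹ - b⁻¹) = -((a + b) / (a - b)) := by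
  rw [inv_add_inv ha hb, inv_sub_inv ha hb, div_div_div_cancel_right₀ (mul_ne_zero ha hb),
    ← neg_sub a b, div_neg]

theorem zpow_ne_zpow_of_norm_ne {K : Type*} [NormedDivisionRing K] {a b : K}
    (hab : ‖a‖ ≠ ‖b‖) {n : ℤ} (hn : n ≠ 0) : a ^ n ≠ b ^ n := by
  intro heq
  have hnorm : ‖a‖ ^ n = ‖b‖ ^ n := by rw [← norm_zpow, ← norm_zpow, heq]
  exact hab ((zpow_left_inj₀ (norm_nonneg a) (norm_nonneg b) hn).1 hnorm)

theorem tendsto_zpow_atTop_cobounded {K : Type*} [NormedDivisionRing K] {q : K} (hq : 1 < ‖q‖) :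
    Tendsto (fun n : ℤ => q ^ n) atTop (cobounded K) := by
  rw [← Nat.map_cast_int_atTop, tendsto_map'_iff, ← tendsto_norm_atTop_iff_cobounded]
  simpa only [Function.comp_def, zpow_natCast, norm_pow] using
    tendsto_pow_atTop_atTop_of_one_lt hq

theorem tendsto_inv_zpow_sub_one_atTop {K : Type*} [NormedDivisionRing K] {q : K}
    (hq : 1 < ‖q‖) : Tendsto (fun n : ℤ => (q ^ n - 1)⁻¹) atTop (𝓝 0) :=
  tendsto_inv₀_cobounded.comp
    ((tendsto_sub_const_cobounded 1).comp (tendsto_zpow_atTop_cobounded hq))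

theorem comap_abs_atTop_eq_cofinite_int : comap (|·| : ℤ → ℤ) atTop = cofinite := by
  rw [comap_abs_atTop, Int.cofinite_eq]

theorem eventually_cofinite_int_iff {p : ℤ → Prop} :
    (∀ᶠ n in cofinite, p n) ↔ ∃ N : ℕ, ∀ n : ℤ, (N : ℤ) ≤ |n| → p n := by
  rw [← comap_abs_atTop_eq_cofinite_int, (atTop_basis.comap _).eventually_iff]
  constructor
  · rintro ⟨b, -, hb⟩
    exact ⟨b.toNat, fun n hn => hb ((Int.self_le_toNat b).trans hn)⟩
  · rintro ⟨N, hN⟩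
    exact ⟨N, trivial, hN⟩

/-- The diagonal entry `m_α = sign(α) · c · (Rᵅ + rᵅ) / (Rᵅ - rᵅ)` attached to an annulus with
inner radius `r` and outer radius `R`, with the prefactor `c` left free; the entries of the
paper are those with `c = R = X` and `r = X - 1`. At `α = 0` the value is `0`. -/
def annulusEntry {K : Type*} [Field K] (c R r : K) (α : ℤ) : K :=
  (Int.sign α : K) * c * (R ^ α + r ^ α) / (R ^ α - r ^ α)

namespace annulusEntry

section Field

variable {K : Type*} [Field K] {R r : K} {α : ℤ}

theorem even (c : K) (hR : R ≠ 0) (hr : r ≠ 0) : (annulusEntry c R r).Even := by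
  intro α
  simp only [annulusEntry, mul_div_assoc, zpow_neg, Int.sign_neg, Int.cast_neg,
    inv_add_inv_div_inv_sub_inv (zpow_ne_zero α hR) (zpow_ne_zero α hr)]
  ring

theorem apply_abs (c : K) (hR : R ≠ 0) (hr : r ≠ 0) (α : ℤ) :
    annulusEntry c R r |α| = annulusEntry c R r α := by
  rcases abs_choice α with h | h <;> simp only [h, even c hR hr α]

theorem eq_of_pos (c : K) (hr : r ≠ 0) (hne : R ^ α ≠ r ^ α) (hα : 0 < α) :
    annulusEntry c R r α = c + 2 * c * ((R / r) ^ α - 1)⁻¹ := by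
  rw [annulusEntry, Int.sign_eq_one_of_pos hα, mul_div_assoc,
    add_div_sub_eq_one_add_two_mul_inv (zpow_ne_zero α hr) hne, ← div_zpow]
  push_cast
  ring

theorem eq_of_neg (c : K) (hR : R ≠ 0) (hr : r ≠ 0) (hne : R ^ α ≠ r ^ α) (hα : α < 0) :
    annulusEntry c R r α = c - 2 * c * (1 - (r / R) ^ α)⁻¹ := by
  have hne_neg : R ^ (-α) ≠ r ^ (-α) := by simpa only [zpow_neg, ne_eq, inv_inj] using hne
  have hratio : (R / r) ^ (-α) = (r / R) ^ α := by rw [zpow_neg, ← inv_zpow, inv_div]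
  rw [← even c hR hr α, eq_of_pos c hr hne_neg (neg_pos.2 hα), hratio,
    ← neg_sub 1 ((r / R) ^ α), inv_neg, mul_neg, ← sub_eq_add_neg]

end Field

section NormedField

variable {K : Type*} [NormedField K] {R r : K}

theorem tendsto_atTop (c : K) (hr : r ≠ 0) (hrR : ‖r‖ < ‖R‖) :
    Tendsto (annulusEntry c R r) atTop (𝓝 c) := by
  have hratio : 1 < ‖R / r‖ := by rwa [norm_div, one_lt_div (norm_pos_iff.2 hr)]
  have hlim : Tendsto (fun α : ℤ => c + 2 * c * ((R / r) ^ α - 1)⁻¹) atTop (𝓝 c) := by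
    simpa only [mul_zero, add_zero] using
      ((tendsto_inv_zpow_sub_one_atTop hratio).const_mul (2 * c)).const_add c
  refine hlim.congr' ?_
  filter_upwards [eventually_gt_atTop 0] with α hα
  exact (eq_of_pos c hr (zpow_ne_zpow_of_norm_ne hrR.ne' hα.ne') hα).symm

theorem tendsto_cofinite (c : K) (hr : r ≠ 0) (hrR : ‖r‖ < ‖R‖) :
    Tendsto (annulusEntry c R r) cofinite (𝓝 c) := by
  have hR : R ≠ 0 := norm_pos_iff.1 ((norm_nonneg r).trans_lt hrR)
  rw [← comap_abs_atTop_eq_cofinite_int]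
  exact ((tendsto_atTop c hr hrR).comp tendsto_comap).congr (apply_abs c hR hr)

end NormedField

end annulusEntry

theorem NtD_annulus_diagonal_entries_general {K : Type*} [NormedField K] {c R r : K}
    (hr : r ≠ 0) (hrR : ‖r‖ < ‖R‖) {m : ℤ → K} (hm : ∀ α ≠ 0, m α = annulusEntry c R r α) :
    (∀ α : ℤ, 0 < α → m α = c + 2 * c * ((R / r) ^ α - 1)⁻¹) ∧
    (∀ α : ℤ, α < 0 → m α = c - 2 * c * (1 - (r / R) ^ α)⁻¹) ∧
    Tendsto m cofinite (𝓝 c) := by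
  have hR : R ≠ 0 := norm_pos_iff.1 ((norm_nonneg r).trans_lt hrR)
  have hne {α : ℤ} (hα : α ≠ 0) : R ^ α ≠ r ^ α := zpow_ne_zpow_of_norm_ne hrR.ne' hα
  refine ⟨fun α hα => ?_, fun α hα => ?_, ?_⟩
  · rw [hm α hα.ne', annulusEntry.eq_of_pos c hr (hne hα.ne') hα]
  · rw [hm α hα.ne, annulusEntry.eq_of_neg c hR hr (hne hα.ne) hα]
  · exact (annulusEntry.tendsto_cofinite c hr hrR).congr'
      ((eventually_cofinite_ne 0).mono fun α hα => (hm α hα).symm)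

/-- For `X > 1` let `m_α := sign(α)·X·(Xᵅ + (X−1)ᵅ)/(Xᵅ − (X−1)ᵅ)` for
nonzero integers `α` (the diagonal entries of `𝒩^{1/2} γ_Γ S^A 𝒩^{1/2}`). Then
`m_α = X + 2X·((X/(X−1))ᵅ − 1)⁻¹` for `α > 0`, `m_α = X − 2X·(1 − ((X−1)/X)ᵅ)⁻¹` for
`α < 0`, and `m_α → X` as `|α| → ∞`. -/
theorem NtD_annulus_diagonal_entries
    (X : ℝ) (hX : 1 < X) (m : ℤ → ℝ)
    (hm : ∀ α : ℤ, α ≠ 0 →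
      m α = (Int.sign α : ℝ) * X * (X ^ α + (X - 1) ^ α) / (X ^ α - (X - 1) ^ α)) :
    (∀ α : ℤ, 0 < α → m α = X + 2 * X * ((X / (X - 1)) ^ α - 1)⁻¹) ∧
    (∀ α : ℤ, α < 0 → m α = X - 2 * X * (1 - ((X - 1) / X) ^ α)⁻¹) ∧
    (∀ ε : ℝ, 0 < ε → ∃ N : ℕ, ∀ α : ℤ, α ≠ 0 → (N : ℤ) ≤ |α| → |m α - X| < ε) := by
  have hr : 0 < X - 1 := sub_pos.2 hX
  have hrX : |X - 1| < |X| := by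
    rw [abs_of_pos hr]
    exact (sub_one_lt X).trans_le (le_abs_self X)
  obtain ⟨hpos, hneg, hlim⟩ := NtD_annulus_diagonal_entries_general hr.ne' hrX hm
  exact ⟨hpos, hneg, fun ε hε =>
    (eventually_cofinite_int_iff.1 (Metric.tendsto_nhds.1 hlim ε hε)).imp fun _ hN α _ => hN α⟩
end

section
/- Let X be a complex Banach space, Σ ⊆ ℂ open and connected, and K : Σ → B(X) analytic with K(z) compact for every z ∈ Σ; set A(z) = I + K(z) and assume A(z̃) is invertible for some z̃ ∈ Σ. Then for every z₀ ∈ Σ there exist: an open neighbourhood V ⊆ Σ of z₀; analytic operator-valued functions W₁, W₂ : V → B(X) such that W₁(z) and W₂(z) are invertible for all z ∈ V; a natural number M; bounded linear projections P₀, P₁, …, P_M on X (each idempotent) that are mutually disjoint (P_i P_j = 0 for i ≠ j) with rank P_j = 1 for 1 ≤ j ≤ M and P₀ + P₁ + ⋯ + P_M = I; and positive integers l₁, …, l_M; such that A(z) = W₁(z)·(P₀ + Σ_{j=1}^{M} (z − z₀)^{l_j} P_j)·W₂(z) for all z ∈ V. -/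
/-!
By the Fredholm alternative, `A z₀` becomes invertible after adding a finite-rank operator that
factors through a projection onto `ker (A z₀)`. Dividing by this invertible perturbation, which
stays invertible near `z₀`, shows that up to analytic invertible factors `A z` is the direct sum of
the identity and an analytic family `m z` of endomorphisms of the finite-dimensional space
`ker (A z₀)`, with `m z₀ = 0`. Hence near each point `A` is either nowhere invertible or invertible
off that point; the points of the two kinds form disjoint open sets, so by connectedness only the
second kind occurs and `det m` does not vanish identically. Germs of analytic functions form a
discrete valuation ring with uniformiser `z - z₀`, so the Smith normal form of `m` over that ring is
diagonal with entries `(z - z₀) ^ k`, and `m z₀ = 0` forces every `k` to be positive.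
-/

open Matrix Module Filter Topology

section SmithNormalForm

variable {ι R : Type*} [Fintype ι] [DecidableEq ι] [CommRing R] [IsDomain R]

theorem exists_isUnit_eq_mul_diagonal_mul [IsPrincipalIdealRing R] {M : Matrix ι ι R}
    (hM : M.det ≠ 0) :
    ∃ (U V : Matrix ι ι R) (d : ι → R), IsUnit U ∧ IsUnit V ∧ M = U * diagonal d * V := by
  have hinj : Function.Injective M.mulVecLin := mulVec_injective_of_det_ne_zero hM
  let e := LinearEquiv.ofInjective M.mulVecLin hinj
  let std := Pi.basisFun R ι
  obtain ⟨b, d, c, hc⟩ := Submodule.exists_smith_normal_form_of_rank_eq std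
    (LinearMap.finrank_range_of_inj hinj)
  let v := c.map e.symm
  have hv (j : ι) : M.mulVecLin (v j) = d j • b j := by
    rw [← hc j]
    exact congrArg Subtype.val (e.apply_symm_apply (c j))
  have hdiag : LinearMap.toMatrix v b M.mulVecLin = diagonal d := by
    ext i j
    rw [LinearMap.toMatrix_apply, hv, map_smul, b.repr_self, Finsupp.smul_single_one,
      diagonal_apply, Finsupp.single_apply]
    grind
  have hstd : LinearMap.toMatrix std std M.mulVecLin = M := LinearMap.toMatrix'_toLin' M
  refine ⟨std.toMatrix b, v.toMatrix std, d, .of_mul_eq_one _ (std.toMatrix_mul_toMatrix_flip b),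
    .of_mul_eq_one _ (v.toMatrix_mul_toMatrix_flip std), ?_⟩
  rw [← hdiag, basis_toMatrix_mul_linearMap_toMatrix_mul_basis_toMatrix, hstd]

theorem exists_isUnit_eq_mul_diagonal_pow_mul [IsDiscreteValuationRing R] {ϖ : R}
    (hϖ : Irreducible ϖ) {M : Matrix ι ι R} (hM : M.det ≠ 0) :
    ∃ (U V : Matrix ι ι R) (k : ι → ℕ),
      IsUnit U ∧ IsUnit V ∧ M = U * diagonal (fun i => ϖ ^ k i) * V := by
  obtain ⟨U, V, d, hU, hV, rfl⟩ := exists_isUnit_eq_mul_diagonal_mul hM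
  have hd (i : ι) : d i ≠ 0 := by
    rw [det_mul, det_mul, det_diagonal] at hM
    exact Finset.prod_ne_zero_iff.1 (right_ne_zero_of_mul (left_ne_zero_of_mul hM)) i
      (Finset.mem_univ i)
  choose k u hku using fun i => IsDiscreteValuationRing.eq_unit_mul_pow_irreducible (hd i) hϖ
  have hu : IsUnit (diagonal fun i => (u i : R)) :=
    isUnit_diagonal.2 (Pi.isUnit_iff.2 fun i => (u i).isUnit)
  refine ⟨U * diagonal fun i => (u i : R), V, k, hU.mul hu, hV, ?_⟩
  rw [mul_assoc U (diagonal _) (diagonal _), diagonal_mul_diagonal, ← funext hku]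

end SmithNormalForm

section AnalyticGerm

variable {𝕜 : Type*} [NontriviallyNormedField 𝕜] (z₀ : 𝕜)

/-- The ring of functions `𝕜 → 𝕜` that are analytic at `z₀`. -/
def functionsAnalyticAt : Subring (𝕜 → 𝕜) where
  carrier := {f | AnalyticAt 𝕜 f z₀}
  mul_mem' hf hg := hf.mul hg
  one_mem' := analyticAt_const
  add_mem' hf hg := hf.add hg
  zero_mem' := analyticAt_const
  neg_mem' hf := hf.neg

/-- The ring of germs at `z₀` of functions that are analytic at `z₀`. -/
def analyticGerms : Subring (Germ (𝓝 z₀) 𝕜) :=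
  ((Germ.coeRingHom (𝓝 z₀)).comp (functionsAnalyticAt z₀).subtype).range

/-- The homomorphism taking a function analytic at `z₀` to its germ. -/
def analyticGerm : functionsAnalyticAt z₀ →+* analyticGerms z₀ := RingHom.rangeRestrict _

/-- Evaluation at `z` of functions analytic at `z₀`. -/
def evalAnalytic (z : 𝕜) : functionsAnalyticAt z₀ →+* 𝕜 :=
  (Pi.evalRingHom _ z).comp (functionsAnalyticAt z₀).subtype

/-- The function `z ↦ z - z₀`, as an element of the ring of functions analytic at `z₀`. -/
def centredCoord : functionsAnalyticAt z₀ := ⟨fun z => z - z₀, analyticAt_id.sub analyticAt_const⟩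

namespace analyticGerms

/-- The value at `z₀` of an analytic germ. -/
def value : analyticGerms z₀ →+* 𝕜 := Germ.valueRingHom.comp (analyticGerms z₀).subtype

/-- The germ of `z ↦ z - z₀`. -/
def coord : analyticGerms z₀ := analyticGerm z₀ (centredCoord z₀)

variable {z₀}

theorem isUnit_iff {x : analyticGerms z₀} : IsUnit x ↔ value z₀ x ≠ 0 := by
  refine ⟨fun hx => (hx.map (value z₀)).ne_zero, fun hx => ?_⟩
  obtain ⟨_, ⟨f, hf⟩, rfl⟩ := x
  refine .of_mul_eq_one (analyticGerm z₀ ⟨_, hf.inv hx⟩) (Subtype.ext (Germ.coe_eq.2 ?_))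
  filter_upwards [hf.continuousAt.eventually_ne hx] with z hz using mul_inv_cancel₀ hz

theorem exists_associated_coord_pow {x : analyticGerms z₀} (hx : x ≠ 0) :
    ∃ n, Associated (coord z₀ ^ n) x := by
  obtain ⟨_, ⟨f, hf⟩, rfl⟩ := x
  have hf0 : ¬ ∀ᶠ z in 𝓝 z₀, f z = 0 := fun h => hx (Subtype.ext (Germ.coe_eq.2 h))
  obtain ⟨n, g, hg, hg0, hfg⟩ := hf.exists_eventuallyEq_pow_smul_nonzero_iff.2 hf0
  obtain ⟨u, hu⟩ : IsUnit (analyticGerm z₀ ⟨g, hg⟩) := isUnit_iff.2 hg0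
  refine ⟨n, u, Subtype.ext ?_⟩
  rw [hu]
  exact (Germ.coe_eq.2 hfg).symm

theorem value_coord : value z₀ (coord z₀) = 0 := sub_self z₀

theorem coord_dvd_iff {x : analyticGerms z₀} : coord z₀ ∣ x ↔ value z₀ x = 0 := by
  refine ⟨fun h => zero_dvd_iff.1 (value_coord (z₀ := z₀) ▸ map_dvd (value z₀) h), fun h => ?_⟩
  rcases eq_or_ne x 0 with rfl | hx
  · exact dvd_zero _
  obtain ⟨_ | n, hn⟩ := exists_associated_coord_pow hx
  · rw [pow_zero] at hn
    exact absurd h (isUnit_iff.1 (hn.isUnit isUnit_one))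
  · exact (dvd_pow_self _ n.succ_ne_zero).trans hn.dvd

theorem coord_ne_zero : coord z₀ ≠ 0 := fun h =>
  let ⟨_, hz, hz₀⟩ := (((Germ.coe_eq.1 (congrArg Subtype.val h)).filter_mono
    (nhdsWithin_le_nhds (s := {z₀}ᶜ))).and self_mem_nhdsWithin).exists
  hz₀ (sub_eq_zero.1 hz)

theorem prime_coord : Prime (coord z₀) := by
  refine ⟨coord_ne_zero, fun h => isUnit_iff.1 h value_coord, fun a b h => ?_⟩
  simpa only [coord_dvd_iff, map_mul, mul_eq_zero] using h

instance : IsDomain (analyticGerms z₀) := by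
  refine @NoZeroDivisors.to_isDomain _ _ _ ⟨fun {x y} hxy => ?_⟩
  obtain ⟨_, ⟨f, hf⟩, rfl⟩ := x
  obtain ⟨_, ⟨g, hg⟩, rfl⟩ := y
  have hfg : analyticOrderAt (f * g) z₀ = ⊤ :=
    analyticOrderAt_eq_top.2 (Germ.coe_eq.1 (congrArg Subtype.val hxy))
  rw [analyticOrderAt_mul hf hg, ENat.add_eq_top, analyticOrderAt_eq_top,
    analyticOrderAt_eq_top] at hfg
  exact hfg.imp (fun h => Subtype.ext (Germ.coe_eq.2 h)) (fun h => Subtype.ext (Germ.coe_eq.2 h))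

instance : IsDiscreteValuationRing (analyticGerms z₀) :=
  .ofHasUnitMulPowIrreducibleFactorization
    ⟨coord z₀, prime_coord.irreducible, exists_associated_coord_pow⟩

end analyticGerms

variable {ι : Type*} [Fintype ι] [DecidableEq ι] {z₀}

theorem analyticGerm_eq_iff {f g : functionsAnalyticAt z₀} :
    analyticGerm z₀ f = analyticGerm z₀ g ↔
      ∀ᶠ z in 𝓝 z₀, evalAnalytic z₀ z f = evalAnalytic z₀ z g :=
  Subtype.ext_iff.trans Germ.coe_eq

theorem eventually_mapMatrix_evalAnalytic_eq {M N : Matrix ι ι (functionsAnalyticAt z₀)}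
    (h : (analyticGerm z₀).mapMatrix M = (analyticGerm z₀).mapMatrix N) :
    ∀ᶠ z in 𝓝 z₀, (evalAnalytic z₀ z).mapMatrix M = (evalAnalytic z₀ z).mapMatrix N := by
  have hentry (i j : ι) := analyticGerm_eq_iff.1 (congrFun₂ h i j)
  filter_upwards [eventually_all.2 fun i => eventually_all.2 (hentry i)] with z hz
  exact Matrix.ext hz

theorem isUnit_mapMatrix_evalAnalytic {M : Matrix ι ι (functionsAnalyticAt z₀)}
    (h : IsUnit ((analyticGerm z₀).mapMatrix M)) :
    IsUnit ((evalAnalytic z₀ z₀).mapMatrix M) :=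
  h.map (analyticGerms.value z₀).mapMatrix

theorem mapMatrix_analyticGerm_surjective :
    Function.Surjective ((analyticGerm z₀).mapMatrix (m := ι)) := fun M => by
  choose N hN using fun i j => RingHom.rangeRestrict_surjective _ (M i j)
  exact ⟨N, Matrix.ext hN⟩

theorem exists_analyticAt_eq_mul_diagonal_pow_mul {m : 𝕜 → Matrix ι ι 𝕜}
    (hm : ∀ i j, AnalyticAt 𝕜 (fun z => m z i j) z₀)
    (hdet : ¬ ∀ᶠ z in 𝓝 z₀, (m z).det = 0) :
    ∃ (U V : 𝕜 → Matrix ι ι 𝕜) (k : ι → ℕ),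
      (∀ i j, AnalyticAt 𝕜 (fun z => U z i j) z₀) ∧ (∀ i j, AnalyticAt 𝕜 (fun z => V z i j) z₀) ∧
      IsUnit (U z₀) ∧ IsUnit (V z₀) ∧
      ∀ᶠ z in 𝓝 z₀, m z = U z * diagonal (fun i => (z - z₀) ^ k i) * V z := by
  let m' : Matrix ι ι (functionsAnalyticAt z₀) := fun i j => ⟨fun z => m z i j, hm i j⟩
  have hm' : ((analyticGerm z₀).mapMatrix m').det ≠ 0 := by
    rw [← RingHom.map_det, ← map_zero (analyticGerm z₀), Ne, analyticGerm_eq_iff]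
    simp only [RingHom.map_det, map_zero]
    exact hdet
  obtain ⟨U, V, k, hU, hV, hUV⟩ :=
    exists_isUnit_eq_mul_diagonal_pow_mul analyticGerms.prime_coord.irreducible hm'
  obtain ⟨U, rfl⟩ := mapMatrix_analyticGerm_surjective U
  obtain ⟨V, rfl⟩ := mapMatrix_analyticGerm_surjective V
  have hfactor : (analyticGerm z₀).mapMatrix m' =
      (analyticGerm z₀).mapMatrix (U * diagonal (fun i => centredCoord z₀ ^ k i) * V) := by
    simpa [diagonal_map, analyticGerms.coord] using hUV
  refine ⟨fun z => (evalAnalytic z₀ z).mapMatrix U, fun z => (evalAnalytic z₀ z).mapMatrix V, k,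
    fun i j => (U i j).2, fun i j => (V i j).2, isUnit_mapMatrix_evalAnalytic hU,
    isUnit_mapMatrix_evalAnalytic hV, ?_⟩
  filter_upwards [eventually_mapMatrix_evalAnalytic_eq hfactor] with z hz
  simp only [map_mul, RingHom.mapMatrix_apply, diagonal_map (map_zero _), map_pow] at hz
  exact hz

end AnalyticGerm

section AnalyticEquivalence

variable {𝕜 R R' : Type*} [NontriviallyNormedField 𝕜] [NormedRing R] [NormedAlgebra 𝕜 R]
  [NormedRing R'] [NormedAlgebra 𝕜 R'] {z₀ : 𝕜}

theorem eventually_isUnit {Y : Type*} [TopologicalSpace Y] [CompleteSpace R] {f : Y → R} {x : Y}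
    (hf : ContinuousAt f x) (hx : IsUnit (f x)) : ∀ᶠ y in 𝓝 x, IsUnit (f y) :=
  hf.eventually (Units.isOpen.mem_nhds hx)

theorem analyticAt_ringInverse {E : Type*} [NormedAddCommGroup E] [NormedSpace 𝕜 E]
    [CompleteSpace R] {f : E → R} {x : E} (hf : AnalyticAt 𝕜 f x) (hx : IsUnit (f x)) :
    AnalyticAt 𝕜 (fun y => Ring.inverse (f y)) x := by
  obtain ⟨u, hu⟩ := hx
  have hinv : AnalyticAt 𝕜 Ring.inverse (f x) := hu ▸ analyticAt_inverse u
  exact hinv.comp hf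

/-- Two functions are analytically equivalent at `z₀` if near `z₀` they differ by left and right
factors that are analytic and invertible at `z₀`. -/
def AnalyticEquivAt (A D : 𝕜 → R) (z₀ : 𝕜) : Prop :=
  ∃ W₁ W₂ : 𝕜 → R, AnalyticAt 𝕜 W₁ z₀ ∧ AnalyticAt 𝕜 W₂ z₀ ∧ IsUnit (W₁ z₀) ∧ IsUnit (W₂ z₀) ∧
    ∀ᶠ z in 𝓝 z₀, A z = W₁ z * D z * W₂ z

namespace AnalyticEquivAt

variable {A B D : 𝕜 → R}

theorem trans (hAB : AnalyticEquivAt A B z₀) (hBD : AnalyticEquivAt B D z₀) :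
    AnalyticEquivAt A D z₀ := by
  obtain ⟨U₁, U₂, hU₁, hU₂, hU₁', hU₂', hA⟩ := hAB
  obtain ⟨V₁, V₂, hV₁, hV₂, hV₁', hV₂', hB⟩ := hBD
  refine ⟨U₁ * V₁, V₂ * U₂, hU₁.mul hV₁, hV₂.mul hU₂, hU₁'.mul hV₁', hV₂'.mul hU₂', ?_⟩
  filter_upwards [hA, hB] with z hAz hBz
  simp only [hAz, hBz, Pi.mul_apply, mul_assoc]

theorem map (h : AnalyticEquivAt A D z₀) (φ : R →* R') (hφ : ∀ x, AnalyticAt 𝕜 φ x) :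
    AnalyticEquivAt (fun z => φ (A z)) (fun z => φ (D z)) z₀ := by
  obtain ⟨W₁, W₂, hW₁, hW₂, hW₁', hW₂', hA⟩ := h
  refine ⟨fun z => φ (W₁ z), fun z => φ (W₂ z), (hφ _).comp hW₁, (hφ _).comp hW₂, hW₁'.map φ,
    hW₂'.map φ, ?_⟩
  filter_upwards [hA] with z hz
  rw [hz, map_mul, map_mul]

theorem apply_eq_zero_iff (h : AnalyticEquivAt A D z₀) : A z₀ = 0 ↔ D z₀ = 0 := by
  obtain ⟨W₁, W₂, -, -, hW₁, hW₂, hA⟩ := h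
  rw [hA.self_of_nhds, hW₂.mul_left_eq_zero, hW₁.mul_right_eq_zero]

theorem exists_isOpen [CompleteSpace R] (h : AnalyticEquivAt A D z₀) {S : Set 𝕜}
    (hS : ∀ᶠ z in 𝓝 z₀, z ∈ S) :
    ∃ V ⊆ S, IsOpen V ∧ z₀ ∈ V ∧ ∃ W₁ W₂ : 𝕜 → R, AnalyticOnNhd 𝕜 W₁ V ∧ AnalyticOnNhd 𝕜 W₂ V ∧
      (∀ z ∈ V, IsUnit (W₁ z)) ∧ (∀ z ∈ V, IsUnit (W₂ z)) ∧ ∀ z ∈ V, A z = W₁ z * D z * W₂ z := by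
  obtain ⟨W₁, W₂, hW₁, hW₂, hW₁', hW₂', hA⟩ := h
  obtain ⟨V, hV, hVo, hz₀⟩ := eventually_nhds_iff.1 <| hS.and <|
    hW₁.eventually_analyticAt.and <| hW₂.eventually_analyticAt.and <|
    (eventually_isUnit hW₁.continuousAt hW₁').and <|
    (eventually_isUnit hW₂.continuousAt hW₂').and hA
  choose hVS hW₁ hW₂ hW₁' hW₂' hA using hV
  exact ⟨V, hVS, hVo, hz₀, W₁, W₂, hW₁, hW₂, hW₁', hW₂', hA⟩

theorem eventually_isUnit_iff [CompleteSpace R] (h : AnalyticEquivAt A D z₀) :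
    ∀ᶠ z in 𝓝 z₀, (IsUnit (A z) ↔ IsUnit (D z)) := by
  obtain ⟨V, -, hVo, hz₀, W₁, W₂, -, -, hW₁, hW₂, hA⟩ := h.exists_isOpen (S := Set.univ) univ_mem
  filter_upwards [hVo.mem_nhds hz₀] with z hz
  obtain ⟨u, hu⟩ := hW₁ z hz
  obtain ⟨v, hv⟩ := hW₂ z hz
  rw [hA z hz, ← hu, ← hv, Units.isUnit_mul_units, Units.isUnit_units_mul]

end AnalyticEquivAt

end AnalyticEquivalence

@[fun_prop]
theorem analyticAt_clm_comp {𝕜 D E F G : Type*} [NontriviallyNormedField 𝕜]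
    [NormedAddCommGroup D] [NormedSpace 𝕜 D] [NormedAddCommGroup E] [NormedSpace 𝕜 E]
    [NormedAddCommGroup F] [NormedSpace 𝕜 F] [NormedAddCommGroup G] [NormedSpace 𝕜 G]
    {f : D → F →L[𝕜] G} {g : D → E →L[𝕜] F} {x : D}
    (hf : AnalyticAt 𝕜 f x) (hg : AnalyticAt 𝕜 g x) : AnalyticAt 𝕜 (fun y => f y ∘L g y) x :=
  ((ContinuousLinearMap.compL 𝕜 E F G).analyticAt_bilinear (f x, g x)).comp₂ hf hg

section Retract

variable {𝕜 E X : Type*} [NontriviallyNormedField 𝕜]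
  [NormedAddCommGroup E] [NormedSpace 𝕜 E] [NormedAddCommGroup X] [NormedSpace 𝕜 X]
  {i : E →L[𝕜] X} {q : X →L[𝕜] E}

/-- For `E` a retract of `X`, with inclusion `i` and retraction `q`, the operator on `X` that acts
as `N` on `E` and as the identity on `ker q`. -/
def extendRetract (h : q ∘L i = 1) : (E →L[𝕜] E) →* (X →L[𝕜] X) where
  toFun N := 1 + i ∘L (N - 1) ∘L q
  map_one' := by simp
  map_mul' N N' := by
    have hqi (y : E) : q (i y) = y := congr($h y)
    ext x
    simp only [_root_.add_apply, _root_.sub_apply, ContinuousLinearMap.comp_apply,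
      one_apply_eq_self, mul_apply_eq_comp, map_add, map_sub, hqi, add_sub_cancel]
    abel

variable (h : q ∘L i = 1)

theorem extendRetract_apply (N : E →L[𝕜] E) : extendRetract h N = 1 + i ∘L (N - 1) ∘L q := rfl

theorem analyticAt_extendRetract (N : E →L[𝕜] E) : AnalyticAt 𝕜 (extendRetract h) N := by
  change AnalyticAt 𝕜 (fun N => 1 + i ∘L (N - 1) ∘L q) N
  fun_prop

theorem isUnit_extendRetract_iff {N : E →L[𝕜] E} : IsUnit (extendRetract h N) ↔ IsUnit N := by
  refine ⟨fun ⟨u, hu⟩ => ?_, fun hN => hN.map _⟩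
  have hqi (y : E) : q (i y) = y := congr($h y)
  have hi : (u : X →L[𝕜] X) ∘L i = i ∘L N := by
    ext y
    simp [hu, extendRetract_apply, hqi]
  have hq : q ∘L (u : X →L[𝕜] X) = N ∘L q := by
    ext y
    simp [hu, extendRetract_apply, hqi]
  refine ⟨⟨N, q ∘L (↑u⁻¹ : X →L[𝕜] X) ∘L i, ?_, ?_⟩, rfl⟩
  · calc N ∘L q ∘L (↑u⁻¹ : X →L[𝕜] X) ∘L i = (N ∘L q) ∘L (↑u⁻¹ : X →L[𝕜] X) ∘L i := rfl
      _ = q ∘L ((u : X →L[𝕜] X) * ↑u⁻¹) ∘L i := by rw [← hq]; rfl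
      _ = 1 := by rw [u.mul_inv]; exact h
  · calc (q ∘L (↑u⁻¹ : X →L[𝕜] X) ∘L i) ∘L N = q ∘L (↑u⁻¹ : X →L[𝕜] X) ∘L (i ∘L N) := rfl
      _ = q ∘L (↑u⁻¹ * (u : X →L[𝕜] X)) ∘L i := by rw [← hi]; rfl
      _ = 1 := by rw [u.inv_mul]; exact h

theorem extendRetract_mul_eq (C : E →L[𝕜] X) :
    extendRetract h (1 - q ∘L C) * (1 - C ∘L q + i ∘L q ∘L C ∘L q) = 1 - C ∘L q := by
  have hqi (y : E) : q (i y) = y := congr($h y)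
  ext x
  simp [extendRetract_apply, hqi]

theorem exists_analyticEquivAt_extendRetract [CompleteSpace X] {A : 𝕜 → X →L[𝕜] X} {z₀ : 𝕜}
    (hA : AnalyticAt 𝕜 A z₀) {L : E →L[𝕜] X} (hAi : A z₀ ∘L i = 0)
    (hL : IsUnit (A z₀ + L ∘L q)) :
    ∃ m : 𝕜 → E →L[𝕜] E, AnalyticAt 𝕜 m z₀ ∧ m z₀ = 0 ∧
      AnalyticEquivAt A (fun z => extendRetract h (m z)) z₀ := by
  let B (z : 𝕜) : X →L[𝕜] X := A z + L ∘L q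
  let C (z : 𝕜) : E →L[𝕜] X := Ring.inverse (B z) ∘L L
  have hB : AnalyticAt 𝕜 B z₀ := hA.add analyticAt_const
  have hC : AnalyticAt 𝕜 C z₀ :=
    analyticAt_clm_comp (analyticAt_ringInverse hB hL) analyticAt_const
  have hCz₀ : C z₀ = i := by
    have hBi : B z₀ ∘L i = L := by
      rw [ContinuousLinearMap.add_comp, hAi, zero_add, ContinuousLinearMap.comp_assoc, h]; rfl
    calc C z₀ = (Ring.inverse (B z₀) * B z₀) ∘L i := congrArg (Ring.inverse (B z₀) ∘L ·) hBi.symm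
      _ = i := by rw [Ring.inverse_mul_cancel _ hL]; rfl
  refine ⟨fun z => 1 - q ∘L C z, by fun_prop, by simp only [hCz₀, h, sub_self], B,
    fun z => 1 - C z ∘L q + i ∘L q ∘L C z ∘L q, hB, by fun_prop, hL, ?_, ?_⟩
  · have hqiq : q ∘L i ∘L q = q := by rw [← ContinuousLinearMap.comp_assoc, h]; rfl
    simp only [hCz₀, hqiq, sub_add_cancel, isUnit_one]
  · filter_upwards [eventually_isUnit hB.continuousAt hL] with z hz
    rw [mul_assoc, extendRetract_mul_eq]
    calc A z = B z - (B z * Ring.inverse (B z)) * (L ∘L q) := by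
          rw [Ring.mul_inverse_cancel _ hz, one_mul, add_sub_cancel_right]
      _ = B z * (1 - C z ∘L q) := by rw [mul_sub, mul_one, mul_assoc]; rfl

end Retract

section CompactPerturbation

theorem exists_rightInverse_of_closedComplemented_ker {𝕜 E F : Type*} [NontriviallyNormedField 𝕜]
    [NormedAddCommGroup E] [NormedSpace 𝕜 E] [CompleteSpace E]
    [NormedAddCommGroup F] [NormedSpace 𝕜 F] [CompleteSpace F] {T : E →L[𝕜] F}
    (hT : Function.Surjective T) (hker : T.ker.ClosedComplemented) :
    ∃ S : F →L[𝕜] E, T ∘L S = 1 := by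
  obtain ⟨Q, hQ⟩ := hker
  have := T.isClosed_ker.completeSpace_coe
  let e := T.equivProdOfSurjectiveOfIsCompl Q (LinearMap.range_eq_top.2 hT)
    (LinearMap.range_eq_top.2 fun x => ⟨x, hQ x⟩) (LinearMap.isCompl_of_proj hQ)
  refine ⟨e.symm ∘L .inl 𝕜 F T.ker, ?_⟩
  ext y
  exact congrArg Prod.fst (e.apply_symm_apply (y, 0))

theorem exists_linearMap_injective_or_surjective (k V W : Type*) [DivisionRing k] [AddCommGroup V]
    [Module k V] [AddCommGroup W] [Module k W] :
    ∃ g : V →ₗ[k] W, Function.Injective g ∨ Function.Surjective g := by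
  rcases (le_total _ _).imp (lift_rank_le_iff_exists_linearMap (R := k) (M := V) (M' := W)).1
    lift_rank_le_iff_exists_linearMap.1 with ⟨g, hg⟩ | ⟨g, hg⟩
  · exact ⟨g, .inl hg⟩
  · obtain ⟨g', hg'⟩ := g.exists_leftInverse_of_injective (LinearMap.ker_eq_bot.2 hg)
    exact ⟨g', .inr (LinearMap.surjective_of_comp_eq_id g g' hg')⟩

section AddCompProj

variable {R V W : Type*} [Ring R] [AddCommGroup V] [Module R V] [AddCommGroup W] [Module R W]
  {T : V →ₗ[R] W} {Q : V →ₗ[R] T.ker} {L : T.ker →ₗ[R] W}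

theorem injective_add_comp_of_injective_mkQ_comp (hQ : ∀ x : T.ker, Q x = x)
    (hL : Function.Injective (T.range.mkQ ∘ₗ L)) : Function.Injective (T + L ∘ₗ Q) := by
  rw [injective_iff_map_eq_zero]
  intro x hx
  have hx : T x + L (Q x) = 0 := hx
  have hQx : Q x = 0 := by
    refine (map_eq_zero_iff _ hL).1 ((Submodule.Quotient.mk_eq_zero _).2 ⟨-x, ?_⟩)
    rw [map_neg, neg_eq_of_add_eq_zero_right hx]
  have hTx : T x = 0 := by rwa [hQx, map_zero, add_zero] at hx
  simpa [hQx] using congrArg Subtype.val (hQ ⟨x, hTx⟩).symm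

theorem surjective_add_comp_of_surjective_mkQ_comp (hQ : ∀ x : T.ker, Q x = x)
    (hL : Function.Surjective (T.range.mkQ ∘ₗ L)) : Function.Surjective (T + L ∘ₗ Q) := by
  intro y
  obtain ⟨w, hw⟩ := hL (T.range.mkQ y)
  obtain ⟨x, hx⟩ : y - L w ∈ T.range := (Submodule.Quotient.eq _).1 hw.symm
  have hT (w : T.ker) : T w = 0 := w.2
  exact ⟨x - Q x + w, by simp [hQ, hT, hx]⟩

end AddCompProj

variable {𝕜 X : Type*}

theorem isUnit_of_injective_of_isCompactOperator_sub_one [NontriviallyNormedField 𝕜]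
    [NormedAddCommGroup X] [NormedSpace 𝕜 X] [CompleteSpace X] {T : X →L[𝕜] X}
    (hT : IsCompactOperator (T - 1 : X →L[𝕜] X)) (hinj : Function.Injective T) : IsUnit T := by
  rcases hT.hasEigenvalue_or_mem_resolventSet (neg_ne_zero.2 one_ne_zero) with heig | hres
  · obtain ⟨v, hv⟩ := heig.exists_hasEigenvector
    have hTv : T v - v = -v := by simpa using hv.apply_eq_smul
    exact absurd (hinj (by simpa using hTv)) hv.2
  · rw [spectrum.mem_resolventSet_iff, ← IsUnit.neg_iff] at hres
    simpa using hres

theorem finiteDimensional_ker_of_isCompactOperator_sub_one [NontriviallyNormedField 𝕜]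
    [CompleteSpace 𝕜] [NormedAddCommGroup X] [NormedSpace 𝕜 X] {T : X →L[𝕜] X}
    (hT : IsCompactOperator (T - 1 : X →L[𝕜] X)) : FiniteDimensional 𝕜 T.ker := by
  let K : T.ker →L[𝕜] X := -((T - 1) ∘L T.ker.subtypeL)
  have hK : IsCompactOperator K := (hT.comp_clm _).neg
  have hKx (x : T.ker) : K x = x := by simp [K]
  have hmem (x : T.ker) : K x ∈ T.ker := hKx x ▸ x.2
  have hid : Set.codRestrict K (T.ker : Set X) hmem = id := funext fun x => Subtype.ext (hKx x)
  exact .of_isCompactOperator_id (hid ▸ hK.codRestrict hmem T.isClosed_ker)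

variable [RCLike 𝕜] [NormedAddCommGroup X] [NormedSpace 𝕜 X] [CompleteSpace X] {T : X →L[𝕜] X}

theorem isUnit_of_surjective_of_isCompactOperator_sub_one
    (hT : IsCompactOperator (T - 1 : X →L[𝕜] X)) (hsurj : Function.Surjective T) : IsUnit T := by
  have := finiteDimensional_ker_of_isCompactOperator_sub_one hT
  obtain ⟨S, hTS⟩ := exists_rightInverse_of_closedComplemented_ker hsurj
    (.of_finiteDimensional T.ker)
  have hS1 : S - 1 = -((T - 1) ∘L S) := by
    rw [ContinuousLinearMap.sub_comp, hTS, neg_sub]; rfl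
  have hS : IsUnit S := by
    refine isUnit_of_injective_of_isCompactOperator_sub_one (hS1 ▸ (hT.comp_clm S).neg) ?_
    exact Function.LeftInverse.injective (g := T) fun x => congr($hTS x)
  obtain ⟨u, rfl⟩ := hS
  exact ⟨u⁻¹, Units.inv_eq_of_mul_eq_one_left hTS⟩

theorem exists_isUnit_add_comp_of_isCompactOperator_sub_one
    (hT : IsCompactOperator (T - 1 : X →L[𝕜] X)) :
    ∃ (Q : X →L[𝕜] T.ker) (L : T.ker →L[𝕜] X), Q ∘L T.ker.subtypeL = 1 ∧ IsUnit (T + L ∘L Q) := by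
  have := finiteDimensional_ker_of_isCompactOperator_sub_one hT
  obtain ⟨Q, hQ⟩ := Submodule.ClosedComplemented.of_finiteDimensional (𝕜 := 𝕜) T.ker
  obtain ⟨g, hg⟩ := exists_linearMap_injective_or_surjective 𝕜 T.ker (X ⧸ T.range)
  obtain ⟨σ, hσ⟩ := T.range.mkQ.exists_rightInverse_of_surjective T.range.range_mkQ
  let L : T.ker →L[𝕜] X := (σ ∘ₗ g).toContinuousLinearMap
  have hL : T.range.mkQ ∘ₗ L = g := by
    rw [LinearMap.coe_toContinuousLinearMap, ← LinearMap.comp_assoc, hσ, LinearMap.id_comp]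
  have hcompact : IsCompactOperator (T + L ∘L Q - 1 : X →L[𝕜] X) := by
    have := FiniteDimensional.proper 𝕜 T.ker
    rw [add_sub_right_comm]
    exact hT.add ((isCompactOperator_of_locallyCompactSpace_rng L).comp_clm Q)
  refine ⟨Q, L, ContinuousLinearMap.ext hQ, ?_⟩
  rw [← hL] at hg
  rcases hg with hinj | hsurj
  · exact isUnit_of_injective_of_isCompactOperator_sub_one hcompact
      (injective_add_comp_of_injective_mkQ_comp hQ hinj)
  · exact isUnit_of_surjective_of_isCompactOperator_sub_one hcompact
      (surjective_add_comp_of_surjective_mkQ_comp hQ hsurj)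

end CompactPerturbation

theorem analyticAt_det {𝕜 ι : Type*} [NontriviallyNormedField 𝕜] [Fintype ι] [DecidableEq ι]
    {m : 𝕜 → Matrix ι ι 𝕜} {z₀ : 𝕜} (hm : ∀ i j, AnalyticAt 𝕜 (fun z => m z i j) z₀) :
    AnalyticAt 𝕜 (fun z => (m z).det) z₀ := by
  simp only [det_apply']
  fun_prop

theorem analyticAt_linearMap_matrix {𝕜 F ι : Type*} [NontriviallyNormedField 𝕜]
    [NormedAddCommGroup F] [NormedSpace 𝕜 F] [Finite ι]
    (τ : Matrix ι ι 𝕜 →ₗ[𝕜] F) {m : 𝕜 → Matrix ι ι 𝕜} {z₀ : 𝕜}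
    (hm : ∀ i j, AnalyticAt 𝕜 (fun z => m z i j) z₀) : AnalyticAt 𝕜 (fun z => τ (m z)) z₀ := by
  classical
  cases nonempty_fintype ι
  have hτ (z : 𝕜) : τ (m z) = ∑ i, ∑ j, m z i j • τ (Matrix.single i j 1) := by
    conv_lhs => rw [matrix_eq_sum_single (m z)]
    simp only [map_sum, ← map_smul, smul_single, smul_eq_mul, mul_one]
  simp only [hτ]
  fun_prop

section OperatorNormalForm

variable {𝕜 E ι : Type*} [NontriviallyNormedField 𝕜] [CompleteSpace 𝕜] [NormedAddCommGroup E]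
  [NormedSpace 𝕜 E] [FiniteDimensional 𝕜 E] [Fintype ι] [DecidableEq ι] {z₀ : 𝕜}

/-- The matrix of an endomorphism of a finite-dimensional normed space with respect to a basis. -/
noncomputable def endMatrixEquiv (b : Basis ι 𝕜 E) : (E →L[𝕜] E) ≃ₐ[𝕜] Matrix ι ι 𝕜 :=
  (Module.End.toContinuousLinearMap E).symm.trans (LinearMap.toMatrixAlgEquiv b)

variable (b : Basis ι 𝕜 E)

theorem endMatrixEquiv_apply (N : E →L[𝕜] E) (i j : ι) :
    endMatrixEquiv b N i j = b.coord i (N (b j)) :=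
  LinearMap.toMatrix_apply ..

theorem endMatrixEquiv_symm_diagonal (d : ι → 𝕜) :
    (endMatrixEquiv b).symm (diagonal d) =
      ∑ i, d i • (b.coord i).toContinuousLinearMap.smulRight (b i) := by
  rw [AlgEquiv.symm_apply_eq]
  ext i j
  rw [diagonal_apply]
  rcases eq_or_ne i j with rfl | hij
  · simp [endMatrixEquiv_apply, Finsupp.single_apply]
  · simp [endMatrixEquiv_apply, Finsupp.single_apply, hij]

theorem analyticAt_endMatrixEquiv_apply {m : 𝕜 → E →L[𝕜] E} (hm : AnalyticAt 𝕜 m z₀) (i j : ι) :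
    AnalyticAt 𝕜 (fun z => endMatrixEquiv b (m z) i j) z₀ := by
  simp only [endMatrixEquiv_apply]
  exact (((b.coord i).toContinuousLinearMap ∘L .apply 𝕜 E (b j)).analyticAt _).comp hm

theorem isUnit_iff_det_endMatrixEquiv_ne_zero {N : E →L[𝕜] E} :
    IsUnit N ↔ (endMatrixEquiv b N).det ≠ 0 := by
  rw [← isUnit_iff_ne_zero, ← isUnit_iff_isUnit_det, MulEquiv.isUnit_map]

theorem eventually_not_isUnit_or_eventually_isUnit_of_finiteDimensional {m : 𝕜 → E →L[𝕜] E}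
    (hm : AnalyticAt 𝕜 m z₀) :
    (∀ᶠ z in 𝓝 z₀, ¬ IsUnit (m z)) ∨ ∀ᶠ z in 𝓝[≠] z₀, IsUnit (m z) := by
  let b := finBasis 𝕜 E
  simp only [isUnit_iff_det_endMatrixEquiv_ne_zero b, not_not]
  have hdet := analyticAt_det (analyticAt_endMatrixEquiv_apply b hm)
  exact hdet.eventually_eq_zero_or_eventually_ne_zero

theorem exists_analyticEquivAt_endMatrixEquiv_symm_diagonal_pow {m : 𝕜 → E →L[𝕜] E}
    (hm : AnalyticAt 𝕜 m z₀) (hunit : ¬ ∀ᶠ z in 𝓝 z₀, ¬ IsUnit (m z)) :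
    ∃ k : ι → ℕ, AnalyticEquivAt m
      (fun z => (endMatrixEquiv b).symm (diagonal fun i => (z - z₀) ^ k i)) z₀ := by
  simp only [isUnit_iff_det_endMatrixEquiv_ne_zero b, not_not] at hunit
  obtain ⟨U, V, k, hU, hV, hU', hV', hUV⟩ :=
    exists_analyticAt_eq_mul_diagonal_pow_mul (analyticAt_endMatrixEquiv_apply b hm) hunit
  let τ := (endMatrixEquiv b).symm
  refine ⟨k, fun z => τ (U z), fun z => τ (V z),
    analyticAt_linearMap_matrix τ.toLinearEquiv.toLinearMap hU,
    analyticAt_linearMap_matrix τ.toLinearEquiv.toLinearMap hV, hU'.map τ, hV'.map τ, ?_⟩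
  filter_upwards [hUV] with z hz
  rw [← map_mul, ← map_mul, ← hz, AlgEquiv.symm_apply_apply]

end OperatorNormalForm

section RetractProj

variable {𝕜 E X ι : Type*} [NontriviallyNormedField 𝕜] [CompleteSpace 𝕜]
  [NormedAddCommGroup E] [NormedSpace 𝕜 E] [FiniteDimensional 𝕜 E]
  [NormedAddCommGroup X] [NormedSpace 𝕜 X] {i : E →L[𝕜] X} {q : X →L[𝕜] E}

/-- For `E` a finite-dimensional retract of `X`, with inclusion `i` and retraction `q`, the
projection of `X` onto the line spanned by the image of the `j`-th basis vector of `E`. -/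
noncomputable def retractProj (i : E →L[𝕜] X) (q : X →L[𝕜] E) (b : Basis ι 𝕜 E) (j : ι) :
    X →L[𝕜] X :=
  ((b.coord j).toContinuousLinearMap ∘L q).smulRight (i (b j))

variable (b : Basis ι 𝕜 E)

theorem orthogonalIdempotents_retractProj (h : q ∘L i = 1) :
    OrthogonalIdempotents (retractProj i q b) := by
  classical
  have hqi (y : E) : q (i y) = y := congr($h y)
  refine OrthogonalIdempotents.iff_mul_eq.2 fun j k => ContinuousLinearMap.ext fun x => ?_
  by_cases hjk : j = k <;> simp [retractProj, hqi, hjk]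

theorem rank_range_retractProj (h : q ∘L i = 1) (j : ι) :
    Module.rank 𝕜 (retractProj i q b j).range = 1 := by
  have hqi (y : E) : q (i y) = y := congr($h y)
  have hib : i (b j) ≠ 0 := fun h0 => b.ne_zero j (by rw [← hqi (b j), h0, map_zero])
  have hcoord : (b.coord j).toContinuousLinearMap ∘L q ≠ 0 := fun h0 => by
    simpa [hqi] using congr($h0 (i (b j)))
  rw [retractProj, ContinuousLinearMap.range_smulRight_apply hcoord]
  exact (rank_submodule_eq_one_iff _).2 ⟨_, Submodule.mem_span_singleton_self _, hib, le_rfl⟩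

theorem extendRetract_endMatrixEquiv_symm_diagonal [Fintype ι] [DecidableEq ι] (h : q ∘L i = 1)
    (d : ι → 𝕜) :
    extendRetract h ((endMatrixEquiv b).symm (diagonal d)) =
      (1 - ∑ j, retractProj i q b j) + ∑ j, d j • retractProj i q b j := by
  have hsub : (endMatrixEquiv b).symm (diagonal d) - 1 =
      ∑ j, (d j - 1) • (b.coord j).toContinuousLinearMap.smulRight (b j) := by
    rw [← endMatrixEquiv_symm_diagonal, ← diagonal_sub, map_sub, diagonal_one, map_one]
  have hconj : i ∘L (∑ j, (d j - 1) • (b.coord j).toContinuousLinearMap.smulRight (b j)) ∘L q =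
      ∑ j, (d j - 1) • retractProj i q b j := by
    ext x
    simp [retractProj]
  rw [extendRetract_apply, hsub, hconj]
  simp only [sub_smul, one_smul, Finset.sum_sub_distrib]
  abel

end RetractProj

theorem completeOrthogonalIdempotents_cons {R : Type*} [Ring R] {n : ℕ} {p : Fin n → R}
    (hp : OrthogonalIdempotents p) :
    CompleteOrthogonalIdempotents (Fin.cons (1 - ∑ i, p i) p : Fin (n + 1) → R) := by
  convert (CompleteOrthogonalIdempotents.equiv (finSuccEquiv n)).2 (.option hp) using 1
  funext j
  cases j using Fin.cases <;> simp

section LocalNormalForm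

variable {𝕜 X : Type*} [RCLike 𝕜] [NormedAddCommGroup X] [NormedSpace 𝕜 X] [CompleteSpace X]
  {A : 𝕜 → X →L[𝕜] X} {z₀ : 𝕜}

theorem exists_analyticEquivAt_extendRetract_ker (hA : AnalyticAt 𝕜 A z₀)
    (hcompact : IsCompactOperator (A z₀ - 1 : X →L[𝕜] X)) :
    ∃ (Q : X →L[𝕜] (A z₀).ker) (h : Q ∘L (A z₀).ker.subtypeL = 1)
      (m : 𝕜 → (A z₀).ker →L[𝕜] (A z₀).ker), AnalyticAt 𝕜 m z₀ ∧ m z₀ = 0 ∧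
        AnalyticEquivAt A (fun z => extendRetract h (m z)) z₀ := by
  obtain ⟨Q, L, h, hL⟩ := exists_isUnit_add_comp_of_isCompactOperator_sub_one hcompact
  exact ⟨Q, h, exists_analyticEquivAt_extendRetract h hA (ContinuousLinearMap.ext Subtype.prop) hL⟩

theorem eventually_not_isUnit_or_eventually_isUnit_of_isCompactOperator_sub_one
    (hA : AnalyticAt 𝕜 A z₀)
    (hcompact : IsCompactOperator (A z₀ - 1 : X →L[𝕜] X)) :
    (∀ᶠ z in 𝓝 z₀, ¬ IsUnit (A z)) ∨ ∀ᶠ z in 𝓝[≠] z₀, IsUnit (A z) := by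
  have := finiteDimensional_ker_of_isCompactOperator_sub_one hcompact
  obtain ⟨Q, h, m, hm, -, hequiv⟩ := exists_analyticEquivAt_extendRetract_ker hA hcompact
  have hiff : ∀ᶠ z in 𝓝 z₀, (IsUnit (A z) ↔ IsUnit (m z)) := by
    simpa only [isUnit_extendRetract_iff] using hequiv.eventually_isUnit_iff
  rw [eventually_congr (hiff.mono fun z hz => not_congr hz),
    eventually_congr (nhdsWithin_le_nhds hiff)]
  exact eventually_not_isUnit_or_eventually_isUnit_of_finiteDimensional hm

theorem exists_analyticEquivAt_add_sum_pow_smul (hA : AnalyticAt 𝕜 A z₀)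
    (hcompact : IsCompactOperator (A z₀ - 1 : X →L[𝕜] X))
    (hunit : ¬ ∀ᶠ z in 𝓝 z₀, ¬ IsUnit (A z)) :
    ∃ (n : ℕ) (P : Fin (n + 1) → X →L[𝕜] X) (k : Fin n → ℕ), CompleteOrthogonalIdempotents P ∧
      (∀ i : Fin n, Module.rank 𝕜 (P i.succ).range = 1) ∧ (∀ i, 0 < k i) ∧
      AnalyticEquivAt A (fun z => P 0 + ∑ i : Fin n, (z - z₀) ^ k i • P i.succ) z₀ := by
  have := finiteDimensional_ker_of_isCompactOperator_sub_one hcompact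
  obtain ⟨Q, h, m, hm, hmz₀, hAm⟩ := exists_analyticEquivAt_extendRetract_ker hA hcompact
  have hmunit : ¬ ∀ᶠ z in 𝓝 z₀, ¬ IsUnit (m z) := by
    refine mt (fun hm' => ?_) hunit
    filter_upwards [hm', hAm.eventually_isUnit_iff] with z hmz hAmz
    rwa [hAmz, isUnit_extendRetract_iff]
  let b := finBasis 𝕜 (A z₀).ker
  obtain ⟨k, hk⟩ := exists_analyticEquivAt_endMatrixEquiv_symm_diagonal_pow b hm hmunit
  have hk0 (j) : k j ≠ 0 := fun hj => by
    have hdiag := (map_eq_zero_iff _ (endMatrixEquiv b).symm.injective).1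
      (hk.apply_eq_zero_iff.1 hmz₀)
    simpa [hj] using congrFun₂ hdiag j j
  refine ⟨_, Fin.cons _ _, k,
    completeOrthogonalIdempotents_cons (orthogonalIdempotents_retractProj b h),
    rank_range_retractProj b h, fun j => (hk0 j).bot_lt, ?_⟩
  have hequiv := hAm.trans (hk.map (extendRetract h) (analyticAt_extendRetract h))
  simp only [extendRetract_endMatrixEquiv_symm_diagonal] at hequiv
  exact hequiv

end LocalNormalForm

section NatIndex

theorem forall_le_iff_forall_fin {n : ℕ} {r : ℕ → Prop} :
    (∀ j ≤ n, r j) ↔ ∀ j : Fin (n + 1), r j :=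
  ⟨fun h j => h j j.is_le, fun h j hj => h ⟨j, Nat.lt_succ_of_le hj⟩⟩

theorem forall_one_le_le_iff_forall_fin {n : ℕ} {r : ℕ → Prop} :
    (∀ j, 1 ≤ j → j ≤ n → r j) ↔ ∀ i : Fin n, r i.succ :=
  ⟨fun h i => h _ (Nat.le_add_left 1 i) i.is_lt, fun h => fun | j + 1, _, hj => h ⟨j, hj⟩⟩

theorem sum_Icc_one_eq_sum_fin {M : Type*} [AddCommMonoid M] (n : ℕ) (f : ℕ → M) :
    ∑ j ∈ Finset.Icc 1 n, f j = ∑ i : Fin n, f i.succ := by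
  rw [← Finset.Ico_add_one_right_eq_Icc, Finset.sum_Ico_eq_sum_range, Finset.sum_range]
  simp only [add_comm 1, Fin.val_succ]
  rfl

end NatIndex

section Global

variable {𝕜 X : Type*} [RCLike 𝕜] [NormedAddCommGroup X] [NormedSpace 𝕜 X] [CompleteSpace X]
  {A : 𝕜 → X →L[𝕜] X} {S : Set 𝕜}

theorem not_eventually_not_isUnit_of_isPreconnected (hS : IsPreconnected S)
    (hA : AnalyticOnNhd 𝕜 A S) (hcompact : ∀ z ∈ S, IsCompactOperator (A z - 1 : X →L[𝕜] X))
    (hunit : ∃ z ∈ S, IsUnit (A z)) {z₀ : 𝕜} (hz₀ : z₀ ∈ S) :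
    ¬ ∀ᶠ z in 𝓝 z₀, ¬ IsUnit (A z) := by
  intro hsing
  obtain ⟨z₁, hz₁, hAz₁⟩ := hunit
  obtain ⟨z, -, hzsing, hzunit⟩ := hS _ _ isOpen_setOfPred_eventually_nhds
    isOpen_setOfPred_eventually_nhdsWithin
    (fun z hz => eventually_not_isUnit_or_eventually_isUnit_of_isCompactOperator_sub_one
      (hA z hz) (hcompact z hz))
    ⟨z₀, hz₀, hsing⟩
    ⟨z₁, hz₁, nhdsWithin_le_nhds (eventually_isUnit (hA z₁ hz₁).continuousAt hAz₁)⟩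
  obtain ⟨w, hwsing, hwunit⟩ := ((hzsing.filter_mono nhdsWithin_le_nhds).and hzunit).exists
  exact hwsing hwunit

theorem gohberg_sigal_factorisation_general (hSopen : IsOpen S) (hSconn : IsPreconnected S)
    (hA : AnalyticOnNhd 𝕜 A S) (hcompact : ∀ z ∈ S, IsCompactOperator (A z - 1 : X →L[𝕜] X))
    (hunit : ∃ z ∈ S, IsUnit (A z)) {z₀ : 𝕜} (hz₀ : z₀ ∈ S) :
    ∃ V : Set 𝕜, IsOpen V ∧ z₀ ∈ V ∧ V ⊆ S ∧
    ∃ W₁ W₂ : 𝕜 → X →L[𝕜] X, AnalyticOnNhd 𝕜 W₁ V ∧ AnalyticOnNhd 𝕜 W₂ V ∧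
      (∀ z ∈ V, IsUnit (W₁ z)) ∧ (∀ z ∈ V, IsUnit (W₂ z)) ∧
    ∃ (M : ℕ) (P : ℕ → X →L[𝕜] X) (l : ℕ → ℕ),
      (∀ j ≤ M, IsIdempotentElem (P j)) ∧
      (∀ i ≤ M, ∀ j ≤ M, i ≠ j → P i ∘L P j = 0) ∧
      (∀ j, 1 ≤ j → j ≤ M → Module.rank 𝕜 (P j).range = 1) ∧
      ∑ j ∈ Finset.range (M + 1), P j = 1 ∧
      (∀ j, 1 ≤ j → j ≤ M → 0 < l j) ∧
      ∀ z ∈ V, A z =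
        W₁ z ∘L (P 0 + ∑ j ∈ Finset.Icc 1 M, (z - z₀) ^ l j • P j) ∘L W₂ z := by
  obtain ⟨M, p, k, hp, hrank, hk, hequiv⟩ := exists_analyticEquivAt_add_sum_pow_smul
    (hA z₀ hz₀) (hcompact z₀ hz₀)
    (not_eventually_not_isUnit_of_isPreconnected hSconn hA hcompact hunit hz₀)
  obtain ⟨V, hVS, hVo, hz₀V, W₁, W₂, hW₁, hW₂, hW₁', hW₂', hfac⟩ :=
    hequiv.exists_isOpen (hSopen.mem_nhds hz₀)
  let P : ℕ → X →L[𝕜] X := Function.extend Fin.val p 0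
  let l : ℕ → ℕ := Function.extend (fun i : Fin M => (i.succ : ℕ)) k 0
  have hP (j : Fin (M + 1)) : P j = p j := Fin.val_injective.extend_apply p 0 j
  have hP0 : P 0 = p 0 := hP 0
  have hl (i : Fin M) : l i.succ = k i :=
    (Fin.val_injective.comp (Fin.succ_injective M)).extend_apply k 0 i
  refine ⟨V, hVo, hz₀V, hVS, W₁, W₂, hW₁, hW₂, hW₁', hW₂', M, P, l, ?_⟩
  simp only [forall_le_iff_forall_fin, forall_one_le_le_iff_forall_fin, sum_Icc_one_eq_sum_fin,
    Finset.sum_range, hP, hP0, hl]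
  exact ⟨hp.idem, fun i j hij => hp.ortho (ne_of_apply_ne _ hij),
    fun i => (hP i.succ).symm ▸ hrank i, hp.complete, hk, hfac⟩

end Global

/-- Gohberg–Sigal factorisation. Let `A(z) = I + K(z)` with
`K : Σ → B(X)` analytic and compact-valued on an open connected set `Σ ⊆ ℂ`, and suppose
`A` is invertible at some point of `Σ`. Then near every `z₀ ∈ Σ` one may factor
`A(z) = W₁(z)(P₀ + Σⱼ (z − z₀)^{lⱼ} Pⱼ)W₂(z)` with `W₁, W₂` analytic and invertible,
`P₀, …, P_M` mutually disjoint projections summing to the identity with `rank Pⱼ = 1`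
for `1 ≤ j ≤ M`, and positive integers `l₁, …, l_M`. -/
theorem gohberg_sigal_factorisation
    {X : Type*} [NormedAddCommGroup X] [NormedSpace ℂ X] [CompleteSpace X]
    (S : Set ℂ) (hSopen : IsOpen S) (hSconn : IsConnected S)
    (K : ℂ → (X →L[ℂ] X)) (A : ℂ → (X →L[ℂ] X))
    (hA : ∀ z, A z = 1 + K z)
    (hKanal : DifferentiableOn ℂ K S)
    (hKcpt : ∀ z ∈ S, IsCompactOperator (K z))
    (hAinv : ∃ z ∈ S, IsUnit (A z))
    (z₀ : ℂ) (hz₀ : z₀ ∈ S) :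
    ∃ (V : Set ℂ), IsOpen V ∧ z₀ ∈ V ∧ V ⊆ S ∧
    ∃ (W₁ W₂ : ℂ → (X →L[ℂ] X)),
      DifferentiableOn ℂ W₁ V ∧ DifferentiableOn ℂ W₂ V ∧
      (∀ z ∈ V, IsUnit (W₁ z)) ∧ (∀ z ∈ V, IsUnit (W₂ z)) ∧
    ∃ (M : ℕ) (P : ℕ → (X →L[ℂ] X)) (l : ℕ → ℕ),
      (∀ j ≤ M, IsIdempotentElem (P j)) ∧
      (∀ i ≤ M, ∀ j ≤ M, i ≠ j → (P i) ∘L (P j) = 0) ∧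
      (∀ j, 1 ≤ j → j ≤ M → Module.rank ℂ (LinearMap.range ((P j) : X →ₗ[ℂ] X)) = 1) ∧
      (∑ j ∈ Finset.range (M + 1), P j) = 1 ∧
      (∀ j, 1 ≤ j → j ≤ M → 0 < l j) ∧
      (∀ z ∈ V, A z =
        W₁ z ∘L (P 0 + ∑ j ∈ Finset.Icc 1 M, (z - z₀) ^ (l j) • P j) ∘L W₂ z) := by
  obtain rfl : A = fun z => 1 + K z := funext hA
  obtain ⟨V, hVo, hz₀V, hVS, W₁, W₂, hW₁, hW₂, hfac⟩ := gohberg_sigal_factorisation_general hSopen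
    hSconn.isPreconnected (analyticOnNhd_const.add (hKanal.analyticOnNhd hSopen))
    (fun z hz => (add_sub_cancel_left 1 (K z)).symm ▸ hKcpt z hz) hAinv hz₀
  exact ⟨V, hVo, hz₀V, hVS, W₁, W₂, hW₁.differentiableOn, hW₂.differentiableOn, hfac⟩
end

section
/- Let U ⊂ ℝ² be a nonempty compact set that is the closure of an open set, has finitely many connected components, and is such that every connected component of its boundary ∂U is path-connected and has zero two-dimensional Lebesgue measure. Let X > 0 be such that U ⊆ B_{X−1}(0). For n ∈ ℕ define the pixelation U_n := ⋃_{j ∈ L_n} ( j + [−1/(2n), 1/(2n)]² ), where L_n := { j ∈ (1/n)ℤ × (1/n)ℤ : j ∈ U }. Then dist_H(∂U_n, ∂U) + dist_H(B_X(0)\U_n, B_X(0)\U) → 0 as n → ∞, where dist_H denotes the Hausdorff distance between subsets of ℝ². -/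
open Filter Topology MeasureTheory

/-- The pixelation of a set `U ⊆ ℝ²` at resolution `1/n`: the union, over all grid points
`j ∈ (1/n)ℤ × (1/n)ℤ` lying in `U`, of the closed squares of side `1/n` centred at `j`. -/
def pixelation (U : Set (EuclideanSpace ℝ (Fin 2))) (n : ℕ) :
    Set (EuclideanSpace ℝ (Fin 2)) :=
  {x | ∃ j : EuclideanSpace ℝ (Fin 2),
    (∀ i : Fin 2, ∃ m : ℤ, j i = (m : ℝ) / n) ∧ j ∈ U ∧
    ∀ i : Fin 2, |x i - j i| ≤ 1 / (2 * n)}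

/-!
A pixel centred at a grid point of `U` stays within `1 / n` of `U`, and a point covered by no such
pixel lies within `1 / n` of a grid point outside `U`. Balls being connected, `U` and its pixelation
therefore differ only within `1 / n` of `∂U`. For any sets `S i` that differ from `T` only in
shrinking neighbourhoods of a compact `∂T`, one has `∂S i ⊆ ∂T ∪ closure (S i ∆ T)`, so `∂S i` lies
close to `∂T`. Conversely, if `∂T` is accumulated by interior points of `T`, then by compactness it
is uniformly close to points lying a fixed `δ` deep inside `T`, and these eventually belong to
`S i`; the same holds for the complements.
-/

open Metric Set
open scoped symmDiff

lemma frontier_subset_frontier_union_closure_symmDiff {α : Type*} [TopologicalSpace α]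
    (s t : Set α) : frontier s ⊆ frontier t ∪ closure (s ∆ t) := by
  have hclosure (a b : Set α) : closure a ⊆ closure b ∪ closure (a ∆ b) := by
    rw [← closure_union, union_comm]
    exact closure_mono (le_symmDiff_sup_right a b)
  have hcompl : closure sᶜ ⊆ closure tᶜ ∪ closure (s ∆ t) := by
    simpa only [compl_symmDiff_compl] using hclosure sᶜ tᶜ
  rw [frontier_eq_closure_inter_closure, frontier_eq_closure_inter_closure,
    inter_union_distrib_right]
  exact inter_subset_inter (hclosure s t) hcompl

lemma frontier_closure_subset_closure_interior {α : Type*} [TopologicalSpace α] {v : Set α}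
    (hv : IsOpen v) : frontier (closure v) ⊆ closure (interior (closure v)) :=
  isClosed_closure.frontier_subset.trans (closure_mono hv.subset_interior_closure)

lemma frontier_subset_closure_interior_compl {α : Type*} [TopologicalSpace α] {s : Set α}
    (hs : IsClosed s) : frontier s ⊆ closure (interior sᶜ) := by
  rw [hs.isOpen_compl.interior_eq, ← frontier_compl]
  exact frontier_subset_closure

lemma inter_frontier_nonempty_of_isPreconnected {α : Type*} [TopologicalSpace α] {c s : Set α}
    (hc : IsPreconnected c) (h : (c ∩ s).Nonempty) (h' : (c ∩ sᶜ).Nonempty) :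
    (c ∩ frontier s).Nonempty := by
  by_contra hempty
  have hcf : ∀ x ∈ c, x ∈ interior s ∨ x ∈ interior sᶜ := fun x hx ↦ by
    by_contra! hx'
    exact hempty ⟨x, hx, frontier_eq_inter_compl_interior.ge hx'⟩
  have hint : (c ∩ interior s).Nonempty := h.imp fun x ⟨hxc, hxs⟩ ↦
    ⟨hxc, (hcf x hxc).resolve_right fun hx ↦ interior_subset hx hxs⟩
  have hint' : (c ∩ interior sᶜ).Nonempty := h'.imp fun x ⟨hxc, hxs⟩ ↦
    ⟨hxc, (hcf x hxc).resolve_left fun hx ↦ hxs (interior_subset hx)⟩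
  obtain ⟨x, -, hx, hx'⟩ := hc _ _ isOpen_interior isOpen_interior hcf hint hint'
  exact interior_subset hx' (interior_subset hx)

lemma thickening_inter_thickening_compl_subset {E : Type*} [SeminormedAddCommGroup E]
    [NormedSpace ℝ E] (δ : ℝ) (s : Set E) :
    thickening δ s ∩ thickening δ sᶜ ⊆ thickening δ (frontier s) := by
  rintro x ⟨hx, hx'⟩
  obtain ⟨a, has, hxa⟩ := mem_thickening_iff.1 hx
  obtain ⟨b, hbs, hxb⟩ := mem_thickening_iff.1 hx'
  obtain ⟨y, hxy, hy⟩ := inter_frontier_nonempty_of_isPreconnected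
    (convex_ball x δ).isPreconnected ⟨a, mem_ball'.2 hxa, has⟩ ⟨b, mem_ball'.2 hxb, hbs⟩
  exact mem_thickening_iff.2 ⟨y, hy, mem_ball'.1 hxy⟩

section PseudoEMetricSpace

variable {α : Type*} [PseudoEMetricSpace α] {s t k : Set α} {δ ε : ℝ}

-- `(thickening δ sᶜ)ᶜ` is the `δ`-erosion of `s`: the points at distance at least `δ` from `sᶜ`.
lemma interior_subset_iUnion_compl_thickening_compl (s : Set α) :
    interior s ⊆ ⋃ δ : Ioi (0 : ℝ), (thickening δ sᶜ)ᶜ := by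
  intro x hx
  have hx' : x ∉ closure sᶜ := by rwa [closure_compl, notMem_compl_iff]
  obtain ⟨δ, hxδ, hδ⟩ := (((eventually_notMem_thickening_of_infEDist_pos hx').filter_mono
    nhdsWithin_le_nhds).and (self_mem_nhdsWithin (s := Ioi 0))).exists
  exact mem_iUnion.2 ⟨⟨δ, hδ⟩, hxδ⟩

lemma exists_subset_thickening_compl_thickening_compl (hk : IsCompact k)
    (hks : k ⊆ closure (interior s)) (hε : 0 < ε) :
    ∃ δ > 0, k ⊆ thickening ε (thickening δ sᶜ)ᶜ := by
  have hcover : k ⊆ ⋃ δ : Ioi (0 : ℝ), thickening ε (thickening δ sᶜ)ᶜ :=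
    calc k ⊆ thickening ε (interior s) := hks.trans (closure_subset_thickening hε _)
      _ ⊆ thickening ε (⋃ δ : Ioi (0 : ℝ), (thickening δ sᶜ)ᶜ) :=
        thickening_subset_of_subset ε (interior_subset_iUnion_compl_thickening_compl s)
      _ = _ := thickening_iUnion ε _
  have hanti : Antitone fun δ : Ioi (0 : ℝ) ↦ thickening ε (thickening (δ : ℝ) sᶜ)ᶜ :=
    fun _ _ hδ ↦ thickening_subset_of_subset ε (compl_subset_compl.2 (thickening_mono hδ sᶜ))
  obtain ⟨⟨δ, hδ⟩, hkδ⟩ :=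
    hk.elim_directed_cover _ (fun _ ↦ isOpen_thickening) hcover hanti.directed_le
  exact ⟨δ, hδ, hkδ⟩

lemma compl_thickening_compl_subset_of_symmDiff_subset (hδ : 0 < δ)
    (hst : s ∆ t ⊆ thickening δ (frontier t)) : (thickening δ tᶜ)ᶜ ⊆ s := by
  rw [compl_subset_comm]
  intro x hxs
  by_cases hxt : x ∈ t
  · have hx : x ∈ thickening δ (closure tᶜ) := thickening_subset_of_subset δ
      (frontier_compl t ▸ frontier_subset_closure) (hst (.inr ⟨hxt, hxs⟩))
    rwa [thickening_closure] at hx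
  · exact self_subset_thickening hδ _ hxt

lemma frontier_subset_thickening_of_symmDiff_subset (hε : 0 < ε) (hδε : δ < ε)
    (hst : s ∆ t ⊆ thickening δ (frontier t)) : frontier s ⊆ thickening ε (frontier t) :=
  calc frontier s ⊆ frontier t ∪ closure (s ∆ t) :=
        frontier_subset_frontier_union_closure_symmDiff s t
    _ ⊆ frontier t ∪ cthickening δ (frontier t) := union_subset_union_right _
        ((closure_mono hst).trans (closure_thickening_subset_cthickening δ _))
    _ ⊆ thickening ε (frontier t) := union_subset (self_subset_thickening hε _)
        (cthickening_subset_thickening' hε hδε _)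

lemma inter_subset_thickening_inter {w : Set α} (hδ : 0 < δ) (hst : s \ t ⊆ thickening δ k)
    (hkt : k ⊆ thickening δ t) (hkw : thickening δ k ⊆ w) :
    w ∩ s ⊆ thickening (δ + δ) (w ∩ t) := by
  rintro x ⟨hxw, hxs⟩
  by_cases hxt : x ∈ t
  · exact self_subset_thickening (add_pos hδ hδ) _ ⟨hxw, hxt⟩
  have hk : k ⊆ thickening δ (w ∩ t) := fun y hy ↦ by
    obtain ⟨z, hzt, hyz⟩ := (mem_thickening_iff_exists_edist_lt t y).1 (hkt hy)
    have hz : z ∈ thickening δ k :=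
      (mem_thickening_iff_exists_edist_lt k z).2 ⟨y, hy, by rwa [edist_comm]⟩
    exact (mem_thickening_iff_exists_edist_lt _ y).2 ⟨z, ⟨hkw hz, hzt⟩, hyz⟩
  exact thickening_thickening_subset δ δ _ (thickening_subset_of_subset δ hk (hst ⟨hxs, hxt⟩))

variable {ι : Type*} {l : Filter ι} {S : ι → Set α} {T : Set α}

lemma eventually_frontier_subset_thickening (hT : IsCompact (frontier T))
    (hint : frontier T ⊆ closure (interior T))
    (hS : ∀ δ > 0, ∀ᶠ i in l, S i ∆ T ⊆ thickening δ (frontier T)) (hε : 0 < ε) :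
    ∀ᶠ i in l, frontier T ⊆ thickening ε (S i) := by
  obtain ⟨δ, hδ, hTδ⟩ := exists_subset_thickening_compl_thickening_compl hT hint hε
  exact (hS δ hδ).mono fun i hi ↦ hTδ.trans
    (thickening_subset_of_subset ε (compl_thickening_compl_subset_of_symmDiff_subset hδ hi))

lemma eventually_frontier_subset_thickening_compl (hT : IsCompact (frontier T))
    (hext : frontier T ⊆ closure (interior Tᶜ))
    (hS : ∀ δ > 0, ∀ᶠ i in l, S i ∆ T ⊆ thickening δ (frontier T)) (hε : 0 < ε) :
    ∀ᶠ i in l, frontier T ⊆ thickening ε (S i)ᶜ := by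
  rw [← frontier_compl] at hT hext ⊢
  refine eventually_frontier_subset_thickening hT hext ?_ hε
  simpa only [compl_symmDiff_compl, frontier_compl] using hS

end PseudoEMetricSpace

section Convergence

variable {α ι : Type*} [PseudoMetricSpace α] {l : Filter ι} {S : ι → Set α} {T : Set α}

lemma tendsto_hausdorffDist_zero_of_subset_thickening
    (h : ∀ ε > 0, ∀ᶠ i in l, S i ⊆ thickening ε T ∧ T ⊆ thickening ε (S i)) :
    Tendsto (fun i ↦ hausdorffDist (S i) T) l (𝓝 0) := by
  refine Metric.tendsto_nhds.2 fun ε hε ↦ (h (ε / 2) (half_pos hε)).mono fun i ⟨hST, hTS⟩ ↦ ?_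
  have hle : hausdorffDist (S i) T ≤ ε / 2 := hausdorffDist_le_of_mem_dist (half_pos hε).le
    (fun x hx ↦ (mem_thickening_iff.1 (hST hx)).imp fun _ hy ↦ ⟨hy.1, hy.2.le⟩)
    (fun x hx ↦ (mem_thickening_iff.1 (hTS hx)).imp fun _ hy ↦ ⟨hy.1, hy.2.le⟩)
  rw [Real.dist_0_eq_abs, abs_of_nonneg hausdorffDist_nonneg]
  exact hle.trans_lt (half_lt_self hε)

lemma tendsto_hausdorffDist_diff {W : Set α} (hT : IsCompact (frontier T))
    (hext : frontier T ⊆ closure (interior Tᶜ)) (hW : IsOpen W) (hTW : frontier T ⊆ W)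
    (hS : ∀ δ > 0, ∀ᶠ i in l, S i ∆ T ⊆ thickening δ (frontier T)) :
    Tendsto (fun i ↦ hausdorffDist (W \ S i) (W \ T)) l (𝓝 0) := by
  obtain ⟨r, hr, hrW⟩ := hT.exists_thickening_subset_open hW hTW
  refine tendsto_hausdorffDist_zero_of_subset_thickening fun ε hε ↦ ?_
  obtain ⟨δ, hδ, hδrε⟩ := exists_between (lt_min hr (half_pos hε))
  have hδW : thickening δ (frontier T) ⊆ W :=
    (thickening_mono (hδrε.le.trans (min_le_left _ _)) _).trans hrW
  have hδε : δ + δ ≤ ε := by linarith [min_le_right r (ε / 2)]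
  have hTδ : frontier T ⊆ thickening δ Tᶜ :=
    hext.trans ((closure_mono interior_subset).trans (closure_subset_thickening hδ _))
  filter_upwards [hS δ hδ, eventually_frontier_subset_thickening_compl hT hext hS hδ]
    with i hi hSδ
  rw [← compl_symmDiff_compl] at hi
  exact ⟨(inter_subset_thickening_inter hδ (subset_union_left.trans hi) hTδ hδW).trans
      (thickening_mono hδε _),
    (inter_subset_thickening_inter hδ (subset_union_right.trans hi) hSδ hδW).trans
      (thickening_mono hδε _)⟩

end Convergence

lemma tendsto_hausdorffDist_frontier {E ι : Type*} [SeminormedAddCommGroup E] [NormedSpace ℝ E]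
    {l : Filter ι} {S : ι → Set E} {T : Set E} (hT : IsCompact (frontier T))
    (hint : frontier T ⊆ closure (interior T)) (hext : frontier T ⊆ closure (interior Tᶜ))
    (hS : ∀ δ > 0, ∀ᶠ i in l, S i ∆ T ⊆ thickening δ (frontier T)) :
    Tendsto (fun i ↦ hausdorffDist (frontier (S i)) (frontier T)) l (𝓝 0) := by
  refine tendsto_hausdorffDist_zero_of_subset_thickening fun ε hε ↦ ?_
  filter_upwards [hS (ε / 2) (half_pos hε), eventually_frontier_subset_thickening hT hint hS hε,
    eventually_frontier_subset_thickening_compl hT hext hS hε] with i hi hin hout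
  exact ⟨frontier_subset_thickening_of_symmDiff_subset hε (half_lt_self hε) hi,
    (subset_inter hin hout).trans (thickening_inter_thickening_compl_subset ε (S i))⟩

section Pixelation

lemma dist_le_sqrt_card_mul {ι : Type*} [Fintype ι] {x y : EuclideanSpace ℝ ι} {r : ℝ}
    (hr : 0 ≤ r) (h : ∀ i, |x i - y i| ≤ r) : dist x y ≤ √(Fintype.card ι) * r := by
  have hsum : ∑ i, dist (x i) (y i) ^ 2 ≤ Fintype.card ι * r ^ 2 := by
    simpa using Finset.sum_le_card_nsmul Finset.univ _ _
      fun i _ ↦ pow_le_pow_left₀ dist_nonneg (h i) 2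
  calc dist x y ≤ √(Fintype.card ι * r ^ 2) :=
        (EuclideanSpace.dist_eq x y).trans_le (Real.sqrt_le_sqrt hsum)
    _ = √(Fintype.card ι) * r := by rw [Real.sqrt_mul (Nat.cast_nonneg _), Real.sqrt_sq hr]

lemma exists_int_abs_sub_div_le {K : Type*} [Field K] [LinearOrder K] [IsStrictOrderedRing K]
    [FloorRing K] (x : K) {a : K} (ha : 0 < a) : ∃ m : ℤ, |x - m / a| ≤ 1 / (2 * a) := by
  refine ⟨round (a * x), ?_⟩
  calc |x - round (a * x) / a| = |a * x - round (a * x)| / a := by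
        rw [← abs_of_pos ha, ← abs_div, abs_of_pos ha, sub_div, mul_div_cancel_left₀ x ha.ne']
    _ ≤ 1 / 2 / a := by gcongr; exact abs_sub_round _
    _ = 1 / (2 * a) := div_div _ _ _

variable {n : ℕ} {U : Set (EuclideanSpace ℝ (Fin 2))}

lemma dist_lt_one_div_of_abs_sub_le {x j : EuclideanSpace ℝ (Fin 2)} (hn : 0 < n)
    (h : ∀ i, |x i - j i| ≤ 1 / (2 * n)) : dist x j < 1 / n := by
  have hsqrt : √2 < 2 := (Real.sqrt_lt' two_pos).2 (by norm_num)
  calc dist x j ≤ √2 * (1 / (2 * n)) := by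
        simpa using dist_le_sqrt_card_mul (by positivity) h
    _ < 2 * (1 / (2 * n)) := by gcongr
    _ = 1 / n := by field_simp

lemma pixelation_subset_thickening (hn : 0 < n) : pixelation U n ⊆ thickening (1 / n) U :=
  fun _ ⟨j, _, hjU, hxj⟩ ↦ mem_thickening_iff.2 ⟨j, hjU, dist_lt_one_div_of_abs_sub_le hn hxj⟩

lemma compl_pixelation_subset_thickening (hn : 0 < n) :
    (pixelation U n)ᶜ ⊆ thickening (1 / n) Uᶜ := by
  intro x hx
  choose m hm using fun i ↦ exists_int_abs_sub_div_le (x i) (Nat.cast_pos.2 hn)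
  let j : EuclideanSpace ℝ (Fin 2) := WithLp.toLp 2 fun i ↦ m i / n
  exact mem_thickening_iff.2
    ⟨j, fun hjU ↦ hx ⟨j, fun i ↦ ⟨m i, rfl⟩, hjU, hm⟩, dist_lt_one_div_of_abs_sub_le hn hm⟩

lemma pixelation_symmDiff_subset_thickening_frontier (hn : 0 < n) :
    pixelation U n ∆ U ⊆ thickening (1 / n) (frontier U) := by
  have hpos : (0 : ℝ) < 1 / n := by positivity
  refine Subset.trans ?_ (thickening_inter_thickening_compl_subset (1 / n) U)
  rintro x (⟨hxP, hxU⟩ | ⟨hxU, hxP⟩)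
  · exact ⟨pixelation_subset_thickening hn hxP, self_subset_thickening hpos _ hxU⟩
  · exact ⟨self_subset_thickening hpos _ hxU, compl_pixelation_subset_thickening hn hxP⟩

lemma eventually_pixelation_symmDiff_subset_thickening_frontier
    (U : Set (EuclideanSpace ℝ (Fin 2))) {δ : ℝ} (hδ : 0 < δ) :
    ∀ᶠ n in atTop, pixelation U n ∆ U ⊆ thickening δ (frontier U) := by
  filter_upwards [(tendsto_one_div_atTop_nhds_zero_nat (𝕜 := ℝ)).eventually_le_const hδ,
    eventually_gt_atTop 0] with n hnδ hn
  exact (pixelation_symmDiff_subset_thickening_frontier hn).trans (thickening_mono hnδ _)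

end Pixelation

theorem pixelation_hausdorff_convergence_general {U W : Set (EuclideanSpace ℝ (Fin 2))}
    (hU : IsCompact (frontier U)) (hint : frontier U ⊆ closure (interior U))
    (hext : frontier U ⊆ closure (interior Uᶜ)) (hW : IsOpen W) (hUW : frontier U ⊆ W) :
    Tendsto (fun n : ℕ ↦ hausdorffDist (frontier (pixelation U n)) (frontier U) +
      hausdorffDist (W \ pixelation U n) (W \ U)) atTop (𝓝 0) := by
  have hpix : ∀ δ > 0, ∀ᶠ n in atTop, pixelation U n ∆ U ⊆ thickening δ (frontier U) :=
    fun _ ↦ eventually_pixelation_symmDiff_subset_thickening_frontier U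
  simpa only [add_zero] using (tendsto_hausdorffDist_frontier hU hint hext hpix).add
    (tendsto_hausdorffDist_diff hU hext hW hUW hpix)

/-- For a compact obstacle `U ⊂ ℝ²` that is the closure of an open set,
has finitely many connected components, and whose boundary components are path-connected
with zero area, the pixelations `Uₙ` of `U` converge geometrically:
`dist_H(∂Uₙ, ∂U) + dist_H(B_X(0)\Uₙ, B_X(0)\U) → 0`. -/
theorem pixelation_hausdorff_convergence
    (U : Set (EuclideanSpace ℝ (Fin 2)))
    (hUne : U.Nonempty) (hUcpt : IsCompact U)
    (hUreg : ∃ V : Set (EuclideanSpace ℝ (Fin 2)), IsOpen V ∧ U = closure V)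
    (hUcomp : {C : Set (EuclideanSpace ℝ (Fin 2)) |
        ∃ x ∈ U, C = connectedComponentIn U x}.Finite)
    (hbdry : ∀ x ∈ frontier U,
        IsPathConnected (connectedComponentIn (frontier U) x) ∧
        volume (connectedComponentIn (frontier U) x) = 0)
    (X : ℝ) (hX : 0 < X) (hUX : U ⊆ Metric.ball (0 : EuclideanSpace ℝ (Fin 2)) (X - 1)) :
    Tendsto (fun n : ℕ =>
        Metric.hausdorffDist (frontier (pixelation U n)) (frontier U) +
        Metric.hausdorffDist
          (Metric.ball (0 : EuclideanSpace ℝ (Fin 2)) X \ pixelation U n)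
          (Metric.ball (0 : EuclideanSpace ℝ (Fin 2)) X \ U))
      atTop (𝓝 0) := by
  obtain ⟨V, hV, rfl⟩ := hUreg
  have hfr := isClosed_closure.frontier_subset (s := closure V)
  exact pixelation_hausdorff_convergence_general (hUcpt.of_isClosed_subset isClosed_frontier hfr)
    (frontier_closure_subset_closure_interior hV)
    (frontier_subset_closure_interior_compl isClosed_closure) Metric.isOpen_ball
    (hfr.trans (hUX.trans (Metric.ball_subset_ball (sub_le_self X zero_le_one))))
end
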